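/- arXiv:2305.06691 — 9 statements merged into one kernel-verified Lean document; each statement's English description precedes it below -/
import Mathlib

section
/- Let q ≥ 2, n1 ≥ 1, n2 ≥ 1 and n = n1 + n2. If there exists a nonadaptive q-ary single-error-correcting code of length n2 of cardinality ⌊q^{n2} / ((q−1)·n + 1)⌋, then there exists a q-ary single-error-correcting code of length n = n1 + n2 with one-time feedback and q^{n1} · ⌊q^{n2} / ((q−1)·n + 1)⌋ messages. -/
/-!
Let `C` be the given nonadaptive code, with `K` words. A message is a pair `(u, c)` of a word `u`
of the first block and a word `c ∈ C`; the first block transmits `u` uncoded. Suppose that `y` is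
received. The `K` messages with `u = y` may still suffer an error, so they send `c`, whose ball of
radius one must be reserved. The messages with `u` at distance one from `y` have already used up
the error: each needs a single private word outside those balls. All other messages are
incompatible with `y`, and what they send is irrelevant.

There are at most `(q - 1) * n1 * K` messages of the second kind, and the balls occupy at most
`K * ((q - 1) * n2 + 1)` words, so there is room as soon as `K * ((q - 1) * n + 1) ≤ q ^ n2`,
which holds because `K` is the floor of
`q ^ n2 / ((q - 1) * n + 1)`. This is `exists_second_block`; the two cardinality bounds are
`card_sphere_le` and `card_ball_le`.
-/

/-- A `q`-ary single-error-correcting code of length `n1 + n2` with one-time feedback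
and `M` messages: encoding maps `f` (first block) and `g` (second block, depending on
the symbols received in the first block), whose clouds are pairwise disjoint. -/
def OneTimeFeedbackCode (q n1 n2 M : ℕ) : Prop :=
  ∃ (f : Fin M → (Fin n1 → Fin q)) (g : Fin M → (Fin n1 → Fin q) → (Fin n2 → Fin q)),
    ∀ m m' : Fin M, m ≠ m' →
      Disjoint
        {p : (Fin n1 → Fin q) × (Fin n2 → Fin q) |
          hammingDist p.1 (f m) + hammingDist p.2 (g m p.1) ≤ 1}
        {p : (Fin n1 → Fin q) × (Fin n2 → Fin q) |
          hammingDist p.1 (f m') + hammingDist p.2 (g m' p.1) ≤ 1}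

/-- A nonadaptive `q`-ary single-error-correcting code of length `n` of cardinality `M`:
a set of words with pairwise Hamming distance at least `3`. -/
def NonadaptiveCode (q n M : ℕ) : Prop :=
  ∃ C : Finset (Fin n → Fin q),
    C.card = M ∧ ∀ x ∈ C, ∀ y ∈ C, x ≠ y → 3 ≤ hammingDist x y

/-- A word at distance one from `x` is `x` with one coordinate `i` replaced by a letter other than
`x i`. Only the upper bound is needed, although equality holds. -/
theorem card_sphere_le (q k : ℕ) (x : Fin k → Fin q) :
    (Finset.univ.filter fun y : Fin k → Fin q => hammingDist x y = 1).card ≤ (q - 1) * k := by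
  have hsub : (Finset.univ.filter fun y : Fin k → Fin q => hammingDist x y = 1) ⊆
      Finset.univ.biUnion fun i : Fin k =>
        (Finset.univ.erase (x i)).image fun a => Function.update x i a := by
    intro y hy
    simp only [Finset.mem_filter, Finset.mem_univ, true_and, hammingDist] at hy
    obtain ⟨i, hi⟩ := Finset.card_eq_one.mp hy
    have key : ∀ j, x j ≠ y j ↔ j = i := fun j => by
      have := Finset.ext_iff.mp hi j
      simpa using this
    simp only [Finset.mem_biUnion, Finset.mem_image, Finset.mem_erase, Finset.mem_univ, true_and,
      and_true]
    refine ⟨i, y i, ((key i).2 rfl).symm, ?_⟩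
    ext1 j
    by_cases hj : j = i
    · subst hj; simp
    · rw [Function.update_of_ne hj]
      by_contra hne
      exact hj ((key j).1 hne)
  calc _ ≤ _ := Finset.card_le_card hsub
    _ ≤ (Finset.univ : Finset (Fin k)).card * (q - 1) := by
        refine Finset.card_biUnion_le_card_mul _ _ _ fun i _ => ?_
        refine Finset.card_image_le.trans ?_
        simp [Finset.card_erase_of_mem]
    _ = (q - 1) * k := by simp [mul_comm]

theorem card_ball_le (q k : ℕ) (x : Fin k → Fin q) :
    (Finset.univ.filter fun y : Fin k → Fin q => hammingDist x y ≤ 1).card ≤ (q - 1) * k + 1 := by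
  have hsub : (Finset.univ.filter fun y : Fin k → Fin q => hammingDist x y ≤ 1) ⊆
      insert x (Finset.univ.filter fun y : Fin k → Fin q => hammingDist x y = 1) := by
    intro y hy
    simp only [Finset.mem_filter, Finset.mem_univ, true_and, Finset.mem_insert] at hy ⊢
    rcases Nat.le_one_iff_eq_zero_or_eq_one.mp hy with h | h
    · exact Or.inl (hammingDist_eq_zero.mp h).symm
    · exact Or.inr h
  have h1 := Finset.card_le_card hsub
  have h2 := Finset.card_insert_le x
    (Finset.univ.filter fun y : Fin k → Fin q => hammingDist x y = 1)
  have h3 := card_sphere_le q k x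
  omega

/-- For a fixed received first block `y`, the second blocks can be chosen so that no output `z`
is compatible with two distinct messages. -/
theorem exists_second_block (q n1 n2 : ℕ) (C : Finset (Fin n2 → Fin q))
    (hC : ∀ x ∈ C, ∀ y ∈ C, x ≠ y → 3 ≤ hammingDist x y)
    (hcard : C.card * ((q - 1) * (n1 + n2) + 1) ≤ q ^ n2) (y : Fin n1 → Fin q) :
    ∃ G : (Fin n1 → Fin q) × C → (Fin n2 → Fin q), ∀ m m', m ≠ m' → ∀ z,
      hammingDist y m.1 + hammingDist z (G m) ≤ 1 →
      hammingDist y m'.1 + hammingDist z (G m') ≤ 1 → False := by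
  classical
  -- `A` holds the messages one error away from `y`, and `B` the words reserved by the others.
  set A : Finset ((Fin n1 → Fin q) × C) :=
    (Finset.univ.filter fun u : Fin n1 → Fin q => hammingDist y u = 1) ×ˢ Finset.univ with hA
  set B : Finset (Fin n2 → Fin q) :=
    C.biUnion fun c => Finset.univ.filter fun z => hammingDist c z ≤ 1 with hB
  have hAc : A.card ≤ (q - 1) * n1 * C.card := by
    rw [hA, Finset.card_product]
    simpa using Nat.mul_le_mul_right C.card (card_sphere_le q n1 y)
  have hBc : B.card ≤ C.card * ((q - 1) * n2 + 1) :=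
    Finset.card_biUnion_le_card_mul _ _ _ fun c _ => card_ball_le q n2 c
  have hle : A.card ≤ Bᶜ.card := by
    rw [Finset.card_compl]
    simp only [Fintype.card_pi, Fintype.card_fin, Finset.prod_const, Finset.card_univ]
    refine Nat.le_sub_of_add_le ((Nat.add_le_add hAc hBc).trans (le_trans (le_of_eq ?_) hcard))
    ring
  obtain ⟨e⟩ : Nonempty (A ↪ (Bᶜ : Finset _)) :=
    Function.Embedding.nonempty_of_card_le (by simpa only [Fintype.card_coe] using hle)
  have memA : ∀ m, m ∈ A ↔ hammingDist y m.1 = 1 := fun m => by simp [hA]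
  have notB : ∀ a : A, ∀ c ∈ C, ¬ hammingDist (e a : Fin n2 → Fin q) c ≤ 1 := fun a c hc h => by
    refine Finset.mem_compl.mp (e a).2 ?_
    refine Finset.mem_biUnion.mpr ?_
    exact ⟨c, hc, by simpa [hammingDist_comm] using h⟩
  refine ⟨fun m => if h : m ∈ A then e ⟨m, h⟩ else m.2, fun m k hne z hm_out hk_out => ?_⟩
  -- A message compatible with `(y, z)` either lies in `A` and sends exactly `z`,
  -- or has first block `y` and a codeword within distance one of `z`.
  have split : ∀ m : (Fin n1 → Fin q) × C,
      hammingDist y m.1 +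
        hammingDist z (if h : m ∈ A then (e ⟨m, h⟩ : Fin n2 → Fin q) else m.2) ≤ 1 →
      (∃ h : m ∈ A, z = e ⟨m, h⟩) ∨ (y = m.1 ∧ hammingDist z m.2 ≤ 1) := by
    intro m h
    by_cases hm : m ∈ A
    · rw [dif_pos hm, (memA m).1 hm] at h
      exact Or.inl ⟨hm, hammingDist_eq_zero.mp (by omega)⟩
    · rw [dif_neg hm] at h
      have h0 : hammingDist y m.1 ≠ 1 := fun h1 => hm ((memA m).2 h1)
      exact Or.inr ⟨hammingDist_eq_zero.mp (by omega), by omega⟩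
  rcases split m hm_out with ⟨hm, hz⟩ | ⟨hu, hd⟩ <;> rcases split k hk_out with ⟨hk, hz'⟩ | ⟨hu', hd'⟩
  · have := e.injective (Subtype.ext (hz.symm.trans hz'))
    exact hne (congrArg Subtype.val this)
  · exact notB ⟨m, hm⟩ _ k.2.2 (hz ▸ hd')
  · exact notB ⟨k, hk⟩ _ m.2.2 (hz' ▸ hd)
  · have hcc : (m.2 : Fin n2 → Fin q) ≠ k.2 := fun hc =>
      hne (Prod.ext (hu.symm.trans hu') (Subtype.ext hc))
    have h3 := hC _ m.2.2 _ k.2.2 hcc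
    have h4 := hammingDist_triangle (m.2 : Fin n2 → Fin q) z k.2
    rw [hammingDist_comm _ z] at h4
    omega

theorem one_time_feedback_from_nonadaptive (q n1 n2 n : ℕ)
    (hq : 2 ≤ q) (hn1 : 1 ≤ n1) (hn2 : 1 ≤ n2) (hn : n = n1 + n2)
    (h : NonadaptiveCode q n2 (q ^ n2 / ((q - 1) * n + 1))) :
    OneTimeFeedbackCode q n1 n2 (q ^ n1 * (q ^ n2 / ((q - 1) * n + 1))) := by
  obtain ⟨C, hK, hC⟩ := h
  have hcard : C.card * ((q - 1) * (n1 + n2) + 1) ≤ q ^ n2 := by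
    rw [hK, ← hn]
    exact Nat.div_mul_le_self _ _
  choose G hG using exists_second_block q n1 n2 C hC hcard
  rw [← hK]
  let φ : Fin (q ^ n1 * C.card) ≃ (Fin n1 → Fin q) × C :=
    (Fintype.equivFinOfCardEq (by simp)).symm
  refine ⟨fun m => (φ m).1, fun m y => G y (φ m), fun m m' hne => ?_⟩
  rw [Set.disjoint_left]
  rintro ⟨y, z⟩ h1 h2
  exact hG y (φ m) (φ m') (φ.injective.ne hne) z h1 h2
end

section
/- Let q ≥ 2, k ≥ 2 and n = (q^k − 1)/(q − 1). Then the maximal number M of messages for which there exists a q-ary single-error-correcting code of length n with one-time feedback and M messages equals q^{n−k}: a code with q^{n−k} messages exists (with block lengths n1 = n − k and n2 = k), and every such code has at most q^{n−k} messages. -/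
theorem card_hammingSphere_one {q l : ℕ} (c : Fin l → Fin q) :
    (Finset.univ.filter fun x : Fin l → Fin q => hammingDist x c = 1).card = l * (q - 1) := by
  -- The words at distance one are the one-coordinate updates of `c` to a different symbol.
  have himg : (Finset.univ.filter fun x : Fin l → Fin q => hammingDist x c = 1)
      = (Finset.univ.sigma fun i : Fin l => Finset.univ.erase (c i)).image
          (fun p : (_ : Fin l) × Fin q => Function.update c p.1 p.2) := by
    ext x
    simp only [Finset.mem_filter, Finset.mem_univ, true_and, Finset.mem_image, Finset.mem_sigma,
      Finset.mem_erase, and_true, hammingDist, Finset.card_eq_one]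
    constructor
    · rintro ⟨i, hi⟩
      simp only [Finset.ext_iff, Finset.mem_filter, Finset.mem_univ, true_and,
        Finset.mem_singleton] at hi
      refine ⟨⟨i, x i⟩, (hi i).2 rfl, ?_⟩
      funext j
      by_cases hj : j = i
      · subst hj; simp
      · have := mt (hi j).1 hj
        simp only [Function.update_of_ne hj]
        exact (not_not.1 this).symm
    · rintro ⟨⟨i, a⟩, ha, rfl⟩
      refine ⟨i, ?_⟩
      ext j
      by_cases hj : j = i
      · subst hj; simpa using ha
      · simp [hj]
  rw [himg, Finset.card_image_of_injOn, Finset.card_sigma]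
  · simp
  · rintro ⟨i, a⟩ ha ⟨j, b⟩ hb h
    simp only [Finset.coe_sigma, Set.mem_sigma_iff, Finset.mem_coe, Finset.mem_erase,
      Finset.mem_univ, and_true, true_and] at ha hb
    have hi := congrFun h i
    by_cases hij : i = j
    · subst hij
      simp at hi
      simp [hi]
    · simp only [Function.update_self, Function.update_of_ne hij] at hi
      exact absurd hi ha

theorem card_hammingBall_one {q l : ℕ} (c : Fin l → Fin q) :
    (Finset.univ.filter fun x : Fin l → Fin q => hammingDist x c ≤ 1).card
      = 1 + l * (q - 1) := by
  have h : (Finset.univ.filter fun x : Fin l → Fin q => hammingDist x c ≤ 1)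
      = insert c (Finset.univ.filter fun x : Fin l → Fin q => hammingDist x c = 1) := by
    ext x
    simp only [Finset.mem_filter, Finset.mem_univ, true_and, Finset.mem_insert]
    rw [Nat.le_one_iff_eq_zero_or_eq_one, hammingDist_eq_zero]
  rw [h, Finset.card_insert_of_notMem (by simp), card_hammingSphere_one, add_comm]

theorem card_cloud {q n1 n2 : ℕ} (c : Fin n1 → Fin q)
    (g : (Fin n1 → Fin q) → (Fin n2 → Fin q)) :
    (Finset.univ.filter fun p : (Fin n1 → Fin q) × (Fin n2 → Fin q) =>
      hammingDist p.1 c + hammingDist p.2 (g p.1) ≤ 1).card = 1 + (n1 + n2) * (q - 1) := by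
  have h : (Finset.univ.filter fun p : (Fin n1 → Fin q) × (Fin n2 → Fin q) =>
        hammingDist p.1 c + hammingDist p.2 (g p.1) ≤ 1)
      = ((Finset.univ.filter fun y => hammingDist y (g c) ≤ 1).image fun y => (c, y)) ∪
        ((Finset.univ.filter fun x => hammingDist x c = 1).image fun x => (x, g x)) := by
    ext ⟨x, y⟩
    simp only [Finset.mem_filter, Finset.mem_univ, true_and, Finset.mem_union, Finset.mem_image,
      Prod.mk.injEq]
    constructor
    · intro hxy
      rcases Nat.eq_zero_or_pos (hammingDist x c) with h0 | h0
      · obtain rfl := hammingDist_eq_zero.1 h0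
        exact Or.inl ⟨y, by omega, rfl, rfl⟩
      · have hy : hammingDist y (g x) = 0 := by omega
        exact Or.inr ⟨x, by omega, rfl, (hammingDist_eq_zero.1 hy).symm⟩
    · rintro (⟨y', hy, rfl, rfl⟩ | ⟨x', hx, rfl, rfl⟩)
      · simpa using hy
      · simp [hx]
  rw [h, Finset.card_union_of_disjoint, Finset.card_image_of_injective,
    Finset.card_image_of_injective, card_hammingBall_one, card_hammingSphere_one]
  · ring
  · intro a b hab
    exact congrArg Prod.fst hab
  · intro a b hab
    exact congrArg Prod.snd hab
  · rw [Finset.disjoint_left]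
    simp only [Finset.mem_image, Finset.mem_filter, Finset.mem_univ, true_and]
    rintro _ ⟨y, -, rfl⟩ ⟨x, hx, hxy⟩
    obtain rfl : x = c := congrArg Prod.fst hxy
    simp at hx

/-- Sphere packing: disjoint clouds fit into the space of all channel outputs. -/
theorem OneTimeFeedbackCode.mul_le {q n1 n2 M : ℕ} (h : OneTimeFeedbackCode q n1 n2 M) :
    M * (1 + (n1 + n2) * (q - 1)) ≤ q ^ (n1 + n2) := by
  obtain ⟨f, g, hfg⟩ := h
  let C : Fin M → Finset ((Fin n1 → Fin q) × (Fin n2 → Fin q)) := fun m =>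
    Finset.univ.filter fun p => hammingDist p.1 (f m) + hammingDist p.2 (g m p.1) ≤ 1
  have hdisj : Set.PairwiseDisjoint (↑(Finset.univ : Finset (Fin M))) C := by
    intro m _ m' _ hm
    have := hfg m m' hm
    rw [Function.onFun, ← Finset.disjoint_coe]
    simpa [C] using this
  have hcard := Finset.card_biUnion hdisj
  have hle := Finset.card_le_univ (Finset.univ.biUnion C)
  rw [hcard, Finset.sum_congr rfl (fun m _ => card_cloud (f m) (g m))] at hle
  simpa [pow_add] using hle

/-- For a received first block `y`, the words for the second block given to the possible messages
`x`: the fixed word `z` for `x = y`, and distinct words outside the unit ball about `z` for the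
neighbours of `y`. -/
theorem exists_feedback_labelling {q k l : ℕ} (h : 1 + (l + k) * (q - 1) = q ^ k)
    (z : Fin k → Fin q) (y : Fin l → Fin q) :
    ∃ G : (Fin l → Fin q) → (Fin k → Fin q), G y = z ∧
      (∀ x, hammingDist y x = 1 → 1 < hammingDist (G x) z) ∧
      ∀ x x', hammingDist y x = 1 → hammingDist y x' = 1 → G x = G x' → x = x' := by
  let B := Finset.univ.filter fun w : Fin k → Fin q => hammingDist w z ≤ 1
  let S := Finset.univ.filter fun x : Fin l → Fin q => hammingDist x y = 1
  have hB : B.card = 1 + k * (q - 1) := card_hammingBall_one z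
  have hS : S.card = l * (q - 1) := card_hammingSphere_one y
  have hle : S.card ≤ Bᶜ.card := by
    rw [Finset.card_compl, hB, hS]
    simp only [Fintype.card_fun, Fintype.card_fin]
    rw [← h, add_mul]
    omega
  obtain ⟨T, hT, hTS⟩ := Finset.exists_subset_card_eq hle
  let e := Finset.equivOfCardEq hTS.symm
  have hmem : ∀ {x}, hammingDist y x = 1 → x ∈ S := fun {x} hx => by
    simpa [S, hammingDist_comm x y] using hx
  refine ⟨fun x => if hx : x ∈ S then (e ⟨x, hx⟩ : Fin k → Fin q) else z, ?_, ?_, ?_⟩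
  · have : y ∉ S := by simp [S]
    simp [this]
  · intro x hx
    have hw := hT (e ⟨x, hmem hx⟩).2
    simpa [hmem hx, B] using hw
  · intro x x' hx hx' hG
    simp only [hmem hx, hmem hx', dite_true] at hG
    simpa using e.injective (Subtype.ext hG)

theorem oneTimeFeedbackCode_of_perfect {q k l : ℕ} (hq : 2 ≤ q)
    (h : 1 + (l + k) * (q - 1) = q ^ k) : OneTimeFeedbackCode q l k (q ^ l) := by
  let e : Fin (q ^ l) ≃ (Fin l → Fin q) := finFunctionFinEquiv.symm
  let z : Fin k → Fin q := fun _ => ⟨0, by omega⟩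
  choose G hG0 hG1 hG2 using exists_feedback_labelling h z
  refine ⟨e, fun m y => G y (e m), fun m m' hm => Set.disjoint_left.2 ?_⟩
  rintro ⟨y, w⟩ h1 h2
  simp only [Set.mem_ofPred_eq] at h1 h2
  have hne : e m ≠ e m' := fun he => hm (e.injective he)
  generalize e m = x at *
  generalize e m' = x' at *
  rcases Nat.eq_zero_or_pos (hammingDist y x) with h0 | h0 <;>
    rcases Nat.eq_zero_or_pos (hammingDist y x') with h0' | h0'
  · exact hne ((hammingDist_eq_zero.1 h0).symm.trans (hammingDist_eq_zero.1 h0'))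
  · obtain rfl := hammingDist_eq_zero.1 h0
    have hw := hammingDist_eq_zero.1 (show hammingDist w (G y x') = 0 by omega)
    have := hG1 y x' (by omega)
    rw [hG0, hw] at h1
    omega
  · obtain rfl := hammingDist_eq_zero.1 h0'
    have hw := hammingDist_eq_zero.1 (show hammingDist w (G y x) = 0 by omega)
    have := hG1 y x (by omega)
    rw [hG0, hw] at h2
    omega
  · have hw := hammingDist_eq_zero.1 (show hammingDist w (G y x) = 0 by omega)
    have hw' := hammingDist_eq_zero.1 (show hammingDist w (G y x') = 0 by omega)
    exact hne (hG2 y x x' (by omega) (by omega) (hw.symm.trans hw'))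

theorem max_messages_one_time_feedback_hamming_length (q k n : ℕ)
    (hq : 2 ≤ q) (hk : 2 ≤ k) (hn : n = (q ^ k - 1) / (q - 1)) :
    OneTimeFeedbackCode q (n - k) k (q ^ (n - k)) ∧
      ∀ n1 n2 M : ℕ, n1 + n2 = n → OneTimeFeedbackCode q n1 n2 M → M ≤ q ^ (n - k) := by
  have hsum : n = ∑ i ∈ Finset.range k, q ^ i := by rw [hn, Nat.geomSum_eq hq]
  have hkn : k ≤ n := by
    calc k = ∑ i ∈ Finset.range k, 1 := by simp
      _ ≤ n := hsum ▸ Finset.sum_le_sum fun i _ => Nat.one_le_pow _ _ (by omega)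
  have hperf : 1 + n * (q - 1) = q ^ k := by
    have hdvd : q - 1 ∣ q ^ k - 1 := by simpa using Nat.sub_dvd_pow_sub_pow q 1 k
    have hpos : 1 ≤ q ^ k := Nat.one_le_pow _ _ (by omega)
    rw [hn, Nat.div_mul_cancel hdvd]
    omega
  refine ⟨oneTimeFeedbackCode_of_perfect hq (by rwa [Nat.sub_add_cancel hkn]), ?_⟩
  intro n1 n2 M hlen hcode
  have hle := hcode.mul_le
  rw [hlen, hperf] at hle
  refine Nat.le_of_mul_le_mul_right (c := q ^ k) ?_ (by positivity)
  rwa [← pow_add, Nat.sub_add_cancel hkn]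
end

section
/- For every q ≥ 2 and every n with 2 ≤ n ≤ q + 1, there exists a q-ary single-error-correcting code of length n with one-time feedback (with block lengths n1 = n − 2 and n2 = 2) and q^{n−2} messages. -/
/-- The report on the reception of `y` when `x` was sent: zero if `y = x`, and otherwise the
position (shifted by one, so that it is nonzero) and the additive correction of some error,
the only one when the words are at distance one. -/
noncomputable def errorReport {q k : ℕ} [NeZero q] (hk : k < q) (x y : Fin k → Fin q) :
    Fin 2 → Fin q := by
  classical
  exact if h : ∃ i, y i ≠ x i then
    ![⟨h.choose + 1, by have := h.choose.isLt; omega⟩, x h.choose - y h.choose] else 0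

theorem errorReport_self {q k : ℕ} [NeZero q] (hk : k < q) (x : Fin k → Fin q) :
    errorReport hk x x = 0 := by
  simp [errorReport]

theorem errorReport_of_ne {q k : ℕ} [NeZero q] (hk : k < q) {x y : Fin k → Fin q}
    (h : y ≠ x) : ∃ i, y i ≠ x i ∧ (errorReport hk x y 0 : ℕ) = i + 1 ∧
      errorReport hk x y 1 = x i - y i := by
  have h' : ∃ i, y i ≠ x i := Function.ne_iff.mp h
  refine ⟨h'.choose, h'.choose_spec, ?_, ?_⟩ <;> simp [errorReport, h']

theorem two_le_hammingDist_errorReport {q k : ℕ} [NeZero q] (hk : k < q) {x y : Fin k → Fin q}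
    (h : y ≠ x) : 2 ≤ hammingDist (errorReport hk x y) 0 := by
  obtain ⟨i, hi, h0, h1⟩ := errorReport_of_ne hk h
  have hz : ∀ j, errorReport hk x y j ≠ 0 := by
    intro j
    fin_cases j
    · intro hj
      have := congrArg Fin.val hj
      simp [h0] at this
    · intro hj
      exact hi (sub_eq_zero.mp (h1.symm.trans hj)).symm
  simp [hammingDist, hz]

theorem eq_of_hammingDist_le_one {q k : ℕ} {x y : Fin k → Fin q} (h : hammingDist y x ≤ 1)
    {i j : Fin k} (hi : y i ≠ x i) (hj : j ≠ i) : y j = x j := by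
  by_contra hc
  exact hj (Finset.card_le_one.mp h j (by simpa using hc) i (by simpa using hi))

/-- Two words within one error of `y` that yield the same nontrivial report are obtained from `y`
by the same correction. -/
theorem eq_of_errorReport_eq {q k : ℕ} [NeZero q] (hk : k < q) {x x' y : Fin k → Fin q}
    (hx : y ≠ x) (hx' : y ≠ x') (hd : hammingDist y x ≤ 1) (hd' : hammingDist y x' ≤ 1)
    (h : errorReport hk x y = errorReport hk x' y) : x = x' := by
  obtain ⟨i, hi, h0, h1⟩ := errorReport_of_ne hk hx
  obtain ⟨i', hi', h0', h1'⟩ := errorReport_of_ne hk hx'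
  obtain rfl : i = i' := by
    rw [h] at h0
    exact Fin.ext (by omega)
  rw [h, h1'] at h1
  funext j
  by_cases hj : j = i
  · subst hj
    exact (sub_left_inj.mp h1).symm
  · rw [← eq_of_hammingDist_le_one hd hi hj, eq_of_hammingDist_le_one hd' hi' hj]

/-- If `(y, z)` lies in the clouds of both `x` and `x'`, and `y = x`, then `x' = x`: otherwise `z`
equals the error report of `x'`, too far from the zero report of `x`. -/
theorem eq_of_mem_clouds_of_eq {q k : ℕ} [NeZero q] (hk : k < q) {x x' : Fin k → Fin q}
    {z : Fin 2 → Fin q}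
    (h : hammingDist x x + hammingDist z (errorReport hk x x) ≤ 1)
    (h' : hammingDist x x' + hammingDist z (errorReport hk x' x) ≤ 1) : x = x' := by
  by_contra hne
  have hpos := hammingDist_pos.mpr hne
  obtain rfl : z = errorReport hk x' x := hammingDist_eq_zero.mp (by omega)
  rw [errorReport_self] at h
  have := two_le_hammingDist_errorReport hk hne
  omega

/-- For `2 ≤ n ≤ q + 1` there is a one-time feedback code with `q ^ (n - 2)` messages,
with block lengths `n1 = n - 2` and `n2 = 2`. -/
theorem one_time_feedback_reed_solomon_analog (q n : ℕ)
    (hq : 2 ≤ q) (hn2 : 2 ≤ n) (hn : n ≤ q + 1) :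
    OneTimeFeedbackCode q (n - 2) 2 (q ^ (n - 2)) := by
  have : NeZero q := ⟨by omega⟩
  have hk : n - 2 < q := by omega
  let e : Fin (q ^ (n - 2)) ≃ (Fin (n - 2) → Fin q) := finFunctionFinEquiv.symm
  refine ⟨e, fun m y => errorReport hk (e m) y, fun m m' hne => ?_⟩
  rw [Set.disjoint_left]
  rintro ⟨y, z⟩ h h'
  simp only [Set.mem_ofPred_eq] at h h'
  refine hne (e.injective ?_)
  by_cases hy : y = e m
  · rw [hy] at h h'
    exact eq_of_mem_clouds_of_eq hk h h'
  by_cases hy' : y = e m'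
  · rw [hy'] at h h'
    exact Eq.symm (eq_of_mem_clouds_of_eq hk h' (by simpa using h))
  -- Both words now use up their single error in the first block, so `z` is both reports.
  have hpos := hammingDist_pos.mpr hy
  have hpos' := hammingDist_pos.mpr hy'
  have hz : z = errorReport hk (e m) y := hammingDist_eq_zero.mp (by omega)
  have hz' : z = errorReport hk (e m') y := hammingDist_eq_zero.mp (by omega)
  exact eq_of_errorReport_eq hk hy hy' (by omega) (by omega) (hz.symm.trans hz')
end

section
/- (Non-binary DADA, general form.) Let q ≥ 2, n > q and 1 ≤ s ≤ n − 1. Assume there exists a q-ary single-error-correcting code of length n − 1 with s − 1 instances of feedback and M(n−1) messages, each of whose clouds has cardinality exactly 1 + (n−1)(q−1). Then there exists a q-ary single-error-correcting code of length n with s instances of feedback and M(n) messages, each of whose clouds has cardinality exactly 1 + n(q−1), where M(n) is the DADA size determined by M(n−1). -/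
/-!
The new code prepends a block of a single symbol to the old one. A message `m` sends a symbol
`x` first. If `x` arrives, `m` continues with one of the old adaptive encoders; if some
`x' ≠ x` arrives, the only allowed error is spent, so `m` may send a fixed word, and just one
word of the branch `x'` is used up. The cloud of `m` thus has
`(1 + (n-1)(q-1)) + (q-1) = 1 + n(q-1)` elements.

If `a x` messages start with `x` and `M = ∑ a x`, then the branch `x` hosts `a x` old clouds and
`M - a x` single words. Hence the construction works as soon as `a x ≤ M(n-1)` and
`a x * (n-1)(q-1) + M ≤ q^(n-1)` for all `x` (`prepend_symbol`). For the DADA size, with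
`U_q(n) = q * u`, the `a x` are all equal to `M(n-1)`, or all equal to `u`, or equal to `u + 1`
for `q - p_q(n)/q` symbols and to `u` for the others (`exists_first_symbol_counts`). In the last
case `q^(n-1)` is attained with equality, and `u + 1 ≤ M(n-1)` holds because `n > q` gives
`1 + n(q-1) ≥ q^2 > p_q(n)`, whence `H(n) > q * u`.
-/

/-- Given block lengths `ns 0, ns 1, ..., ns s` (the decomposition
`n = ns 0 + ... + ns s`), `blockIdx s ns j` tells in which block the coordinate `j`
lies (as the number of blocks whose starting position is `≤ j`). -/
def blockIdx (s : ℕ) (ns : ℕ → ℕ) (j : ℕ) : ℕ :=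
  ((Finset.range (s + 1)).filter fun k => ∑ t ∈ Finset.range k, ns t ≤ j).card

/-- A `q`-ary single-error-correcting code of length `n` with `s` instances of feedback,
`M` messages, and all clouds of cardinality `c`.  The codeword length is decomposed into
`s + 1` blocks `ns 0 + ... + ns s = n`; the adaptive encoder is represented by a map
`E : Fin M → (Fin n → Fin q) → (Fin n → Fin q)` giving, for a message `m` and a channel
output word `y`, the word actually transmitted; causality requires that the symbol sent
at position `i` depends only on the symbols received in strictly earlier blocks.  The
cloud of `m` is the set of output words `y` differing from the transmitted word `E m y`
in at most one position; the clouds must be pairwise disjoint and each have exactly `c`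
elements. -/
def FeedbackCodeWithCloudCard (q s n M c : ℕ) : Prop :=
  ∃ ns : ℕ → ℕ, (∑ i ∈ Finset.range (s + 1), ns i) = n ∧
    ∃ E : Fin M → (Fin n → Fin q) → (Fin n → Fin q),
      (∀ (m : Fin M) (y y' : Fin n → Fin q) (i : Fin n),
        (∀ j : Fin n, blockIdx s ns (j : ℕ) < blockIdx s ns (i : ℕ) → y j = y' j) →
        E m y i = E m y' i) ∧
      (∀ m m' : Fin M, m ≠ m' →
        Disjoint {y : Fin n → Fin q | hammingDist (E m y) y ≤ 1}
          {y : Fin n → Fin q | hammingDist (E m' y) y ≤ 1}) ∧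
      (∀ m : Fin M, ({y : Fin n → Fin q | hammingDist (E m y) y ≤ 1}).ncard = c)

/-- Hamming bound `H(n) = ⌊q^n / (1 + n(q-1))⌋`. -/
def Hb (q n : ℕ) : ℕ := q ^ n / (1 + n * (q - 1))

/-- `U_q(n)`: the largest multiple of `q` not exceeding the Hamming bound. -/
def Uq (q n : ℕ) : ℕ := q * (q ^ n / (q * (1 + n * (q - 1))))

/-- `p_q(n) = (1 + n(q-1)) (U_q(n) + q) - q^n`. -/
def pq (q n : ℕ) : ℕ := (1 + n * (q - 1)) * (Uq q n + q) - q ^ n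

/-- The DADA size `M(n)` determined by `M(n-1)`. -/
def dadaSize (q n Mprev : ℕ) : ℕ :=
  if q * Mprev < Hb q n then q * Mprev
  else if q ^ 2 ≤ pq q n then Uq q n
  else Uq q n + q - pq q n / q

/-- Block lengths after prepending a block of length `1`. -/
def consBlocks (ns : ℕ → ℕ) : ℕ → ℕ
  | 0 => 1
  | k + 1 => ns k

lemma sum_consBlocks (ns : ℕ → ℕ) (k : ℕ) :
    ∑ t ∈ Finset.range (k + 1), consBlocks ns t = (∑ t ∈ Finset.range k, ns t) + 1 := by
  rw [Finset.sum_range_succ']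
  rfl

lemma blockIdx_consBlocks_zero (s : ℕ) (ns : ℕ → ℕ) :
    blockIdx s (consBlocks ns) 0 = 1 := by
  unfold blockIdx
  rw [Finset.card_filter, Finset.sum_range_succ']
  simp [sum_consBlocks]

lemma blockIdx_consBlocks_succ (s : ℕ) (ns : ℕ → ℕ) (j : ℕ) :
    blockIdx (s + 1) (consBlocks ns) (j + 1) = blockIdx s ns j + 1 := by
  unfold blockIdx
  rw [Finset.card_filter, Finset.card_filter, Finset.sum_range_succ']
  simp [sum_consBlocks]

lemma one_le_blockIdx (s : ℕ) (ns : ℕ → ℕ) (j : ℕ) : 1 ≤ blockIdx s ns j := by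
  unfold blockIdx
  exact Finset.card_pos.mpr ⟨0, by simp⟩

lemma hammingDist_cons {q n : ℕ} (x : Fin q) (w : Fin n → Fin q) (y : Fin (n + 1) → Fin q) :
    hammingDist (Fin.cons x w : Fin (n + 1) → Fin q) y
      = (if x = y 0 then 0 else 1) + hammingDist w (Fin.tail y) := by
  unfold hammingDist
  rw [Finset.card_filter, Finset.card_filter, Fin.sum_univ_succ]
  simp only [Fin.cons_zero, Fin.cons_succ, Fin.tail, ne_eq, ite_not]
  congr 1
  refine Finset.sum_congr rfl fun i _ => ?_
  by_cases hi : w i = y i.succ <;> simp [hi]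

/-- A set of words counted according to the first symbol. -/
lemma ncard_eq_sum_cons {q n : ℕ} (S : Set (Fin (n + 1) → Fin q)) :
    S.ncard = ∑ x : Fin q, {w : Fin n → Fin q | (Fin.cons x w : Fin (n + 1) → Fin q) ∈ S}.ncard := by
  have e : S ≃ Σ x : Fin q, {w : Fin n → Fin q | (Fin.cons x w : Fin (n + 1) → Fin q) ∈ S} :=
    { toFun := fun y => ⟨y.1 0, Fin.tail y.1, by
        simp only [Set.mem_ofPred_eq, Fin.cons_self_tail]; exact y.2⟩
      invFun := fun p => ⟨Fin.cons p.1 p.2.1, p.2.2⟩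
      left_inv := fun y => by simp
      right_inv := fun ⟨x, w, hw⟩ => rfl }
  rw [← Nat.card_coe_set_eq, Nat.card_congr e, Nat.card_sigma]
  rfl

/-- In the branch `x` there is room for one word per message not starting with `x`, outside of
the `a x` old clouds `B i` in use. -/
lemma exists_free_words {q n c Mprev : ℕ} (a : Fin q → ℕ) (x : Fin q)
    (B : Fin Mprev → Set (Fin n → Fin q)) (hB : ∀ i, (B i).ncard = c) (ha : a x ≤ Mprev)
    (hroom : a x * c + (∑ x', a x' - a x) ≤ q ^ n) :
    ∃ f : {m : (Σ x : Fin q, Fin (a x)) // m.1 ≠ x} → (Fin n → Fin q),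
      Function.Injective f ∧ ∀ m (i : Fin (a x)), f m ∉ B (i.castLE ha) := by
  classical
  set O : Set (Fin n → Fin q) := ⋃ i : Fin (a x), B (i.castLE ha) with hO
  have hOc : O.ncard ≤ a x * c := by
    calc O.ncard ≤ ∑ i : Fin (a x), (B (i.castLE ha)).ncard := by
          have := Set.ncard_iUnion_le_of_fintype (fun i : Fin (a x) => B (i.castLE ha))
          exact this
      _ = a x * c := by simp [hB]
  have hfree : q ^ n - a x * c ≤ Nat.card (Oᶜ : Set (Fin n → Fin q)) := by
    have h1 := Set.ncard_add_ncard_compl O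
    rw [Nat.card_coe_set_eq]
    have h2 : Nat.card (Fin n → Fin q) = q ^ n := by simp
    omega
  have hmes : Nat.card {m : (Σ x : Fin q, Fin (a x)) // m.1 ≠ x} = ∑ x', a x' - a x := by
    have h1 : Fintype.card {m : (Σ x : Fin q, Fin (a x)) // m.1 = x} = a x := by
      rw [Fintype.card_congr (Equiv.sigmaSubtype (β := fun x : Fin q => Fin (a x)) x)]
      simp
    rw [Nat.card_eq_fintype_card, Fintype.card_subtype_compl, h1]
    simp
  have hle : Fintype.card {m : (Σ x : Fin q, Fin (a x)) // m.1 ≠ x}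
      ≤ Fintype.card (Oᶜ : Set (Fin n → Fin q)) := by
    rw [← Nat.card_eq_fintype_card, ← Nat.card_eq_fintype_card, hmes]
    omega
  obtain ⟨g⟩ := Function.Embedding.nonempty_of_card_le hle
  refine ⟨fun m => (g m).1, fun m m' hmm => g.injective (Subtype.ext hmm), fun m i hi => ?_⟩
  exact (g m).2 (Set.mem_iUnion.mpr ⟨i, hi⟩)

/-- Prepending one symbol: `a x` of the new messages start with the symbol `x`. -/
lemma prepend_symbol {q s n Mprev M : ℕ} (a : Fin q → ℕ) (hM : ∑ x, a x = M)
    (ha : ∀ x, a x ≤ Mprev) (hroom : ∀ x, a x * (n * (q - 1)) + M ≤ q ^ n)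
    (h : FeedbackCodeWithCloudCard q s n Mprev (1 + n * (q - 1))) :
    FeedbackCodeWithCloudCard q (s + 1) (n + 1) M (1 + (n + 1) * (q - 1)) := by
  classical
  subst hM
  obtain ⟨ns, hns, E, hcaus, hdisj, hcard⟩ := h
  have hax : ∀ x, a x ≤ ∑ x', a x' := fun x =>
    Finset.single_le_sum (f := a) (fun _ _ => Nat.zero_le _) (Finset.mem_univ x)
  choose f hfinj hfree using fun x : Fin q =>
    exists_free_words (c := 1 + n * (q - 1)) a x
      (fun m : Fin Mprev => {y : Fin n → Fin q | hammingDist (E m y) y ≤ 1}) hcard (ha x) (by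
        have h1 := hroom x
        have h2 := hax x
        rw [mul_add]
        omega)
  have hf : ∀ x x' k (hx : k.1 ≠ x) (hx' : k.1 ≠ x'), x = x' → f x ⟨k, hx⟩ = f x' ⟨k, hx'⟩ := by
    rintro x _ k _ _ rfl
    rfl
  -- The encoder, with messages indexed by the first symbol and a number.
  let F : (Σ x : Fin q, Fin (a x)) → (Fin (n + 1) → Fin q) → (Fin (n + 1) → Fin q) :=
    fun m y => Fin.cons m.1
      (if hx : m.1 = y 0 then E (m.2.castLE (ha m.1)) (Fin.tail y) else f (y 0) ⟨m, hx⟩)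
  have hcloud_eq : ∀ m y, m.1 = y 0 → (hammingDist (F m y) y ≤ 1 ↔
      hammingDist (E (m.2.castLE (ha m.1)) (Fin.tail y)) (Fin.tail y) ≤ 1) := by
    intro m y hx
    simp only [F, hammingDist_cons, dif_pos hx, if_pos hx, zero_add]
  have hcloud_ne : ∀ m y, (hx : m.1 ≠ y 0) → (hammingDist (F m y) y ≤ 1 ↔
      Fin.tail y = f (y 0) ⟨m, hx⟩) := by
    intro m y hx
    simp only [F, hammingDist_cons, dif_neg hx, if_neg hx]
    rw [eq_comm (a := Fin.tail y), ← hammingDist_eq_zero]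
    omega
  refine ⟨consBlocks ns, ?_, fun m => F (finSigmaFinEquiv.symm m), ?_, ?_, ?_⟩
  · rw [sum_consBlocks, hns]
  · intro m y y' i hyy
    refine Fin.cases ?_ (fun j => ?_) i (motive := fun i => (∀ j : Fin (n + 1),
      blockIdx (s + 1) (consBlocks ns) (j : ℕ) < blockIdx (s + 1) (consBlocks ns) (i : ℕ) →
        y j = y' j) → F (finSigmaFinEquiv.symm m) y i = F (finSigmaFinEquiv.symm m) y' i) hyy
    · intro _
      simp [F]
    · intro hj
      have h0 : y 0 = y' 0 := by
        apply hj
        have := one_le_blockIdx s ns j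
        simp only [Fin.val_zero, blockIdx_consBlocks_zero, Fin.val_succ,
          blockIdx_consBlocks_succ]
        omega
      simp only [F, Fin.cons_succ, h0]
      split_ifs with hx
      · apply hcaus
        intro k hk
        apply hj
        simpa only [Fin.val_succ, blockIdx_consBlocks_succ, Nat.add_lt_add_iff_right] using hk
      · exact congrFun (hf _ _ _ _ _ h0) j
  · intro m m' hmm
    change Disjoint {y | hammingDist (F (finSigmaFinEquiv.symm m) y) y ≤ 1}
      {y | hammingDist (F (finSigmaFinEquiv.symm m') y) y ≤ 1}
    have hne : finSigmaFinEquiv.symm m ≠ finSigmaFinEquiv.symm m' :=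
      fun h => hmm (finSigmaFinEquiv.symm.injective h)
    generalize finSigmaFinEquiv.symm m = k at hne ⊢
    generalize finSigmaFinEquiv.symm m' = k' at hne ⊢
    rw [Set.disjoint_left]
    intro y hy hy'
    rw [Set.mem_ofPred_eq] at hy' hy
    -- The fixed word of `l` in the branch where `l'` starts avoids the old cloud of `l'`.
    have hmix : ∀ l l' : (Σ x : Fin q, Fin (a x)), l.1 ≠ y 0 → l'.1 = y 0 →
        hammingDist (F l y) y ≤ 1 → hammingDist (F l' y) y ≤ 1 → False := by
      rintro l ⟨x, i⟩ hl hl' h1 h2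
      rw [hcloud_ne l y hl] at h1
      rw [hcloud_eq _ y hl'] at h2
      simp only at hl'
      subst hl'
      exact hfree (y 0) ⟨l, hl⟩ i (by rw [← h1]; exact h2)
    by_cases hk : k.1 = y 0 <;> by_cases hk' : k'.1 = y 0
    · obtain ⟨x, i⟩ := k
      obtain ⟨x', i'⟩ := k'
      rw [hcloud_eq _ y hk] at hy
      rw [hcloud_eq _ y hk'] at hy'
      simp only at hk hk'
      subst hk hk'
      refine Set.disjoint_left.mp (hdisj (i.castLE (ha _)) (i'.castLE (ha _)) ?_) hy hy'
      intro hii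
      apply hne
      rw [Fin.castLE_inj] at hii
      rw [hii]
    · exact hmix k' k hk' hk hy' hy
    · exact hmix k k' hk hk' hy hy'
    · rw [hcloud_ne k y hk] at hy
      rw [hcloud_ne k' y hk'] at hy'
      have := hfinj (y 0) (hy.symm.trans hy')
      exact hne (congrArg Subtype.val this)
  · intro m
    change {y | hammingDist (F (finSigmaFinEquiv.symm m) y) y ≤ 1}.ncard = _
    generalize finSigmaFinEquiv.symm m = k
    have hq : 1 ≤ q := by
      have := k.1.isLt
      omega
    rw [ncard_eq_sum_cons]
    have hbr : ∀ x : Fin q, {w : Fin n → Fin q | (Fin.cons x w : Fin (n + 1) → Fin q) ∈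
        {y : Fin (n + 1) → Fin q | hammingDist (F k y) y ≤ 1}}.ncard
          = 1 + if k.1 = x then n * (q - 1) else 0 := by
      intro x
      by_cases hx : k.1 = x
      · rw [if_pos hx, ← hcard (k.2.castLE (ha k.1))]
        congr 1
        ext w
        simp only [Set.mem_ofPred_eq]
        rw [hcloud_eq k _ (by simpa using hx), Fin.tail_cons]
      · rw [if_neg hx, add_zero, Set.ncard_eq_one]
        refine ⟨f x ⟨k, hx⟩, ?_⟩
        ext w
        simp only [Set.mem_ofPred_eq, Set.mem_singleton_iff]
        rw [hcloud_ne k _ (by simpa using hx), Fin.tail_cons]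
        exact Iff.rfl
    simp only [hbr, Finset.sum_add_distrib, Finset.sum_ite_eq, Finset.mem_univ, if_true]
    simp only [Finset.sum_const, Finset.card_univ, Fintype.card_fin, smul_eq_mul, mul_one]
    rw [add_mul, one_mul]
    omega

/-- The number of DADA messages starting with each symbol. -/
lemma exists_first_symbol_counts (q n Mprev : ℕ) (hq : 2 ≤ q) (hn : q < n + 1) :
    ∃ a : Fin q → ℕ, ∑ x, a x = dadaSize q (n + 1) Mprev ∧ (∀ x, a x ≤ Mprev) ∧
      ∀ x, a x * (n * (q - 1)) + dadaSize q (n + 1) Mprev ≤ q ^ n := by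
  have hq0 : 0 < q := by omega
  set K := 1 + (n + 1) * (q - 1) with hK
  have hK0 : 0 < K := by omega
  have hKn : K = n * (q - 1) + q := by
    rw [hK, add_mul, one_mul]; omega
  have hKq : q * q ≤ K := by
    have h1 : q * (q - 1) ≤ n * (q - 1) := Nat.mul_le_mul_right _ (by omega)
    have h2 : q * (q - 1) + q = q * q := by
      rw [← Nat.mul_succ]; congr 1; omega
    omega
  set u := q ^ (n + 1) / (q * K) with hu
  have hu' : u = q ^ n / K := by
    rw [hu, pow_succ', Nat.mul_div_mul_left _ _ hq0]
  have hU : Uq q (n + 1) = q * u := rfl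
  have hH : Hb q (n + 1) = q ^ (n + 1) / K := rfl
  have huK : u * K ≤ q ^ n := by rw [hu']; exact Nat.div_mul_le_self _ _
  have huK1 : q ^ n < (u + 1) * K := by
    rw [hu']; exact (Nat.div_lt_iff_lt_mul hK0).mp (Nat.lt_succ_self _)
  have hp : pq q (n + 1) = q * ((u + 1) * K - q ^ n) := by
    unfold pq
    rw [hU, ← hK, Nat.mul_sub, pow_succ']
    congr 1
    ring
  unfold dadaSize
  split_ifs with h1 h2
  · refine ⟨fun _ => Mprev, by simp, fun _ => le_rfl, fun _ => ?_⟩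
    rw [hH] at h1
    have h3 : q * Mprev * K ≤ q ^ (n + 1) := (Nat.le_div_iff_mul_le hK0).mp h1.le
    rw [pow_succ', mul_assoc] at h3
    have h4 := Nat.le_of_mul_le_mul_left h3 hq0
    rw [hKn, mul_add, mul_comm Mprev q] at h4
    exact h4
  · refine ⟨fun _ => u, by simp [hU], fun _ => ?_, fun _ => ?_⟩
    · rw [hH, not_lt] at h1
      have h3 : q * u ≤ q ^ (n + 1) / K := by
        rw [Nat.le_div_iff_mul_le hK0, pow_succ', mul_assoc]
        exact Nat.mul_le_mul_left _ huK
      exact Nat.le_of_mul_le_mul_left (h3.trans h1) hq0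
    · rw [hU, mul_comm q u, ← mul_add, ← hKn]
      exact huK
  · set d := (u + 1) * K - q ^ n with hd
    have hpd : pq q (n + 1) / q = d := by rw [hp, Nat.mul_div_cancel_left _ hq0]
    have hdq : d < q := by
      rw [hp, not_le, pow_two] at h2
      exact Nat.lt_of_mul_lt_mul_left h2
    have hM : Uq q (n + 1) + q - pq q (n + 1) / q = q * u + (q - d) := by
      rw [hpd, hU]; omega
    rw [hM]
    have hu1 : u + 1 ≤ Mprev := by
      rw [hH, not_lt] at h1
      have h3 : q * u + 1 ≤ q ^ (n + 1) / K := by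
        rw [Nat.le_div_iff_mul_le hK0, pow_succ']
        have h4 : q ^ n = (u + 1) * K - d := by omega
        have h5 : q * d ≤ q * q := Nat.mul_le_mul_left _ hdq.le
        have h6 : q * (u + 1) * K = q * q ^ n + q * d := by
          rw [mul_assoc, ← mul_add]; congr 1; omega
        have h7 : 2 * K ≤ q * K := Nat.mul_le_mul_right _ hq
        have h8 : q * (u + 1) * K = (q * u) * K + q * K := by ring
        rw [add_mul]
        omega
      exact Nat.lt_of_mul_lt_mul_left (h3.trans h1)
    refine ⟨fun x => u + if (x : ℕ) < q - d then 1 else 0, ?_, fun x => ?_, fun x => ?_⟩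
    · rw [Finset.sum_add_distrib, ← Finset.card_filter, Fin.card_filter_val_lt]
      simp
    · dsimp only
      split_ifs <;> omega
    · dsimp only
      have h3 : (u + if (x : ℕ) < q - d then 1 else 0) * (n * (q - 1))
          ≤ (u + 1) * (n * (q - 1)) := Nat.mul_le_mul_right _ (by split_ifs <;> omega)
      have h4 : (u + 1) * K = (u + 1) * (n * (q - 1)) + (q * u + q) := by rw [hKn]; ring
      omega

/-- Non-binary DADA, general form: from a code of length `n - 1` with `s - 1` instances
of feedback, all of whose clouds have cardinality exactly `1 + (n-1)(q-1)`, DADA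
produces a code of length `n` with `s` instances of feedback of the DADA size, all of
whose clouds have cardinality exactly `1 + n(q-1)`. -/
theorem dada_general_step (q n s Mprev : ℕ) (hq : 2 ≤ q) (hn : q < n)
    (hs1 : 1 ≤ s) (hs2 : s ≤ n - 1)
    (h : FeedbackCodeWithCloudCard q (s - 1) (n - 1) Mprev (1 + (n - 1) * (q - 1))) :
    FeedbackCodeWithCloudCard q s n (dadaSize q n Mprev) (1 + n * (q - 1)) := by
  obtain ⟨n, rfl⟩ : ∃ k, n = k + 1 := ⟨n - 1, by omega⟩
  obtain ⟨s, rfl⟩ : ∃ k, s = k + 1 := ⟨s - 1, by omega⟩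
  obtain ⟨a, hM, ha, hroom⟩ := exists_first_symbol_counts q n Mprev hq hn
  exact prepend_symbol a hM ha hroom h
end

section
/- (Non-binary DADA, nonadaptive-to-one-time-feedback step.) Let q ≥ 2 and n > q. If there exists a nonadaptive q-ary single-error-correcting code of length n − 1 of cardinality M(n−1), then there exists a q-ary single-error-correcting code of length n with one-time feedback and M(n) messages, where M(n) is the DADA size determined by M(n−1). -/
theorem card_hamming_ball_le (n q : ℕ) (x : Fin n → Fin q) :
    (Finset.univ.filter fun y : Fin n → Fin q => hammingDist y x ≤ 1).card ≤
      1 + n * (q - 1) := by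
  classical
  have hsub : (Finset.univ.filter fun y : Fin n → Fin q => hammingDist y x ≤ 1) ⊆
      insert x (((Finset.univ : Finset (Fin n)).sigma
        fun i => (Finset.univ : Finset (Fin q)).erase (x i)).image
          fun p => Function.update x p.1 p.2) := by
    intro y hy
    have hy1 : hammingDist y x ≤ 1 := by simpa using hy
    rw [Finset.mem_insert]
    by_cases hyx : y = x
    · exact Or.inl hyx
    right
    obtain ⟨i, hi⟩ := Function.ne_iff.mp hyx
    refine Finset.mem_image.mpr ⟨⟨i, y i⟩, by simpa using hi, ?_⟩
    funext j
    by_cases hj : j = i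
    · subst hj; simp
    · rw [Function.update_of_ne hj]
      by_contra hne
      exact hj (Finset.card_le_one.mp hy1 j (by simpa using fun h => hne h.symm) i
        (by simpa using hi))
  refine (Finset.card_le_card hsub).trans ((Finset.card_insert_le _ _).trans ?_)
  rw [add_comm]
  refine Nat.add_le_add_left (Finset.card_image_le.trans ?_) 1
  simp [Finset.card_sigma]

/-- Words for the second block after a fixed first symbol has been received: the messages in `F`
(those that sent this symbol) get disjoint radius-one balls, the others get radius-zero balls,
i.e. single words, and all of these are pairwise disjoint. -/
theorem exists_second_block_s6 (n q M : ℕ) (C : Finset (Fin n → Fin q))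
    (hC : ∀ x ∈ C, ∀ y ∈ C, x ≠ y → 3 ≤ hammingDist x y) (F : Finset (Fin M))
    (hF : F.card ≤ C.card) (hM : F.card * (n * (q - 1)) + M ≤ q ^ n) :
    ∃ g : Fin M → (Fin n → Fin q), ∀ m m', m ≠ m' → ∀ y,
      hammingDist y (g m) ≤ (if m ∈ F then 1 else 0) →
      hammingDist y (g m') ≤ (if m' ∈ F then 1 else 0) → False := by
  classical
  obtain ⟨D, hDC, hD⟩ := Finset.exists_subset_card_eq hF
  let B : Finset (Fin n → Fin q) :=
    D.biUnion fun x => Finset.univ.filter fun y => hammingDist y x ≤ 1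
  have hB : B.card ≤ F.card * (1 + n * (q - 1)) := by
    rw [← hD]
    exact Finset.card_biUnion_le_card_mul _ _ _ fun x _ => card_hamming_ball_le n q x
  have hcard : (Fᶜ).card ≤ (Bᶜ).card := by
    rw [Finset.card_compl, Finset.card_compl]
    have hMF : F.card ≤ M := by simpa using Finset.card_le_univ F
    simp only [Fintype.card_fin, Fintype.card_pi, Finset.prod_const, Finset.card_univ]
    rw [mul_add, mul_one] at hB
    omega
  obtain ⟨E, hEB, hE⟩ := Finset.exists_subset_card_eq hcard
  let e₁ : F ≃ D := Finset.equivOfCardEq hD.symm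
  let e₂ : (Fᶜ : Finset (Fin M)) ≃ E := Finset.equivOfCardEq hE.symm
  let g : Fin M → (Fin n → Fin q) := fun m =>
    if h : m ∈ F then (e₁ ⟨m, h⟩ : Fin n → Fin q) else e₂ ⟨m, Finset.mem_compl.mpr h⟩
  have hg₁ : ∀ m (h : m ∈ F), g m = e₁ ⟨m, h⟩ := fun m h => dif_pos h
  have hg₂ : ∀ m (h : m ∉ F), g m = e₂ ⟨m, Finset.mem_compl.mpr h⟩ := fun m h => dif_neg h
  have hmixed : ∀ m m', m ∈ F → m' ∉ F → ¬ hammingDist (g m') (g m) ≤ 1 := by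
    intro m m' hm hm' hd
    have h1 : g m' ∈ Bᶜ := by
      rw [hg₂ m' hm']; exact hEB (e₂ _).2
    refine Finset.mem_compl.mp h1 (Finset.mem_biUnion.mpr ⟨g m, ?_, by simpa using hd⟩)
    rw [hg₁ m hm]; exact (e₁ _).2
  refine ⟨g, fun m m' hne y h1 h2 => ?_⟩
  by_cases hm : m ∈ F <;> by_cases hm' : m' ∈ F <;>
    simp only [hm, hm', if_true, if_false, Nat.le_zero, hammingDist_eq_zero] at h1 h2
  · have h3 : 3 ≤ hammingDist (g m) (g m') := by
      refine hC _ ?_ _ ?_ ?_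
      · rw [hg₁ m hm]; exact hDC (e₁ _).2
      · rw [hg₁ m' hm']; exact hDC (e₁ _).2
      · rw [hg₁ m hm, hg₁ m' hm']
        intro h
        exact hne (congrArg Subtype.val (e₁.injective (Subtype.ext h)))
    have h4 := hammingDist_triangle_left (g m) (g m') y
    omega
  · subst h2; exact hmixed m m' hm hm' h1
  · subst h1; exact hmixed m' m hm' hm h2
  · subst h1
    rw [hg₂ m hm, hg₂ m' hm'] at h2
    exact hne (congrArg Subtype.val (e₂.injective (Subtype.ext h2)))

theorem oneTimeFeedback_of_le (q k Mprev M t : ℕ) (hq : 0 < q) (h : NonadaptiveCode q k Mprev)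
    (hMt : M ≤ q * t) (ht : t ≤ Mprev) (hM : t * (k * (q - 1)) + M ≤ q ^ k) :
    OneTimeFeedbackCode q 1 k M := by
  classical
  obtain ⟨C, hCc, hC⟩ := h
  let r : Fin M → Fin q := fun m => ⟨m % q, Nat.mod_lt _ hq⟩
  have hF : ∀ a, (Finset.univ.filter fun m => r m = a).card ≤ t := by
    intro a
    rw [← Finset.card_range t]
    refine Finset.card_le_card_of_injOn (fun m : Fin M => (m : ℕ) / q) ?_ ?_
    · intro m _
      simpa using Nat.div_lt_of_lt_mul (m.2.trans_le hMt)
    · intro m hm m' hm' hdiv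
      have h1 : r m = r m' := by
        have e1 : r m = a := by simpa using hm
        have e2 : r m' = a := by simpa using hm'
        rw [e1, e2]
      have h2 : (m : ℕ) % q = m' % q := congrArg Fin.val h1
      have h3 : (m : ℕ) / q = m' / q := hdiv
      refine Fin.ext ?_
      rw [← Nat.div_add_mod (m : ℕ) q, ← Nat.div_add_mod (m' : ℕ) q, h2, h3]
  have hex := fun a => exists_second_block_s6 k q M C hC (Finset.univ.filter fun m => r m = a)
    ((hF a).trans (ht.trans hCc.ge))
    ((Nat.add_le_add_right (Nat.mul_le_mul_right _ (hF a)) M).trans hM)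
  choose g hg using hex
  refine ⟨fun m _ => r m, fun m y => g (y 0) m, fun m m' hne => ?_⟩
  rw [Set.disjoint_left]
  rintro ⟨y₁, y₂⟩ h1 h2
  -- An error in the single symbol of the first block leaves none for the second block.
  have key : ∀ m, hammingDist y₁ (fun _ => r m) + hammingDist y₂ (g (y₁ 0) m) ≤ 1 →
      hammingDist y₂ (g (y₁ 0) m) ≤
        if m ∈ (Finset.univ.filter fun m => r m = y₁ 0) then 1 else 0 := by
    intro m hm
    split_ifs with hr
    · omega
    · have : hammingDist y₁ (fun _ => r m) ≠ 0 := by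
        rw [hammingDist_ne_zero]
        intro h
        exact hr (by simp [h])
      omega
  exact hg (y₁ 0) m m' hne y₂ (key m h1) (key m' h2)

/-- Non-binary DADA, nonadaptive-to-one-time-feedback step. -/
theorem dada_nonadaptive_to_one_time_feedback (q n Mprev : ℕ)
    (hq : 2 ≤ q) (hn : q < n) (h : NonadaptiveCode q (n - 1) Mprev) :
    ∃ n1 n2 : ℕ, n1 + n2 = n ∧ OneTimeFeedbackCode q n1 n2 (dadaSize q n Mprev) := by
  obtain ⟨k, rfl⟩ : ∃ k, n = k + 1 := ⟨n - 1, by omega⟩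
  rw [Nat.add_sub_cancel] at h
  refine ⟨1, k, by omega, ?_⟩
  have hq0 : 0 < q := by omega
  obtain ⟨b, hb⟩ : ∃ b, b = k * (q - 1) := ⟨_, rfl⟩
  obtain ⟨Q, hQ⟩ : ∃ Q, Q = q ^ k := ⟨_, rfl⟩
  have hB : 1 + (k + 1) * (q - 1) = b + q := by
    rw [hb, add_mul, one_mul]; omega
  have hpow : q ^ (k + 1) = q * Q := by rw [hQ, pow_succ, mul_comm]
  have hBpos : 0 < b + q := by omega
  obtain ⟨s, hs⟩ : ∃ s, s = Q / (b + q) := ⟨_, rfl⟩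
  have hU : Uq q (k + 1) = q * s := by
    rw [Uq, hB, hpow, Nat.mul_div_mul_left _ _ hq0, hs]
  have hH : Hb q (k + 1) = q * Q / (b + q) := by rw [Hb, hB, hpow]
  have hp : pq q (k + 1) = q * ((b + q) * (s + 1) - Q) := by
    rw [pq, hB, hU, hpow, Nat.mul_sub]
    congr 1; ring
  have hs1 : s * (b + q) ≤ Q := hs ▸ Nat.div_mul_le_self _ _
  have hs2 : Q < (b + q) * (s + 1) := hs ▸ Nat.lt_mul_div_succ Q hBpos
  unfold dadaSize
  rw [hU, hH, hp, Nat.mul_div_cancel_left _ hq0]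
  split_ifs with h1 h2
  · refine oneTimeFeedback_of_le q k Mprev _ Mprev hq0 h le_rfl le_rfl ?_
    rw [← hb, ← hQ]
    have h3 := (Nat.le_div_iff_mul_le hBpos).mp h1.le
    have h4 : Mprev * (b + q) ≤ Q := Nat.le_of_mul_le_mul_left (by rwa [← mul_assoc]) hq0
    linarith
  · have h3 : q * s ≤ q * Q / (b + q) := by
      rw [Nat.le_div_iff_mul_le hBpos, mul_assoc]
      exact Nat.mul_le_mul_left q hs1
    refine oneTimeFeedback_of_le q k Mprev _ s hq0 h le_rfl
      (Nat.le_of_mul_le_mul_left (h3.trans (not_lt.mp h1)) hq0) ?_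
    rw [← hb, ← hQ]
    linarith
  · obtain ⟨P, hP⟩ : ∃ P, P = (b + q) * (s + 1) - Q := ⟨_, rfl⟩
    rw [← hP] at h2 ⊢
    have hPq : P < q := Nat.lt_of_mul_lt_mul_left (a := q) (by rw [← pow_two]; omega)
    have hPQ : Q + P = (b + q) * (s + 1) := by omega
    obtain ⟨M, hM⟩ : ∃ M, M = q * s + q - P := ⟨_, rfl⟩
    have hMP : M + P = q * s + q := by omega
    have hMQ : (s + 1) * b + M = Q := by linarith
    have hMle : M ≤ q * (s + 1) := by linarith
    -- The size respects the Hamming bound, hence `q * s < M ≤ q * Mprev`.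
    have hMH : M ≤ q * Q / (b + q) := by
      rw [Nat.le_div_iff_mul_le hBpos]
      have := Nat.mul_le_mul_right b hMle
      have h5 : q * Q = q * (s + 1) * b + q * M := by rw [← hMQ]; ring
      linarith
    have hlt : q * s < q * Mprev := by omega
    rw [← hM]
    refine oneTimeFeedback_of_le q k Mprev _ (s + 1) hq0 h hMle
      (Nat.lt_of_mul_lt_mul_left hlt) ?_
    rw [← hb, ← hQ, hMQ]
end

section
/- (Non-binary DADA, complete-feedback step.) Let q ≥ 2 and n > q. If there exists a family of M(n−1) pairwise disjoint clouds in (Fin (n−1) → Fin q), each of cardinality exactly 1 + (n−1)(q−1), then there exists a family of M(n) pairwise disjoint clouds in (Fin n → Fin q), each of cardinality exactly 1 + n(q−1), where M(n) is the DADA size determined by M(n−1). -/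
/-!
Prepend a symbol to the words of length `n'`, so that the cube of length `n' + 1` splits into `q`
subcubes, each a copy of the cube of length `n'`. Keep `k a` of the given clouds in subcube `a`.
A kept cloud becomes a cloud of length `n' + 1` as soon as it receives one further word from each
of the other `q - 1` subcubes, and it does not matter which word. With `M = ∑ a, k a`, subcube `a`
has to provide `k a * (1 + n' * (q - 1))` words for its own clouds and `M - k a` words for the
others, so the only condition is `M + k a * (n' * (q - 1)) ≤ q ^ n'` (`exists_clouds_succ`).

It remains to choose `k`. Below the Hamming bound all the clouds can be kept. Otherwise, put
`u = U_q(n) / q`; the constant choice `k a = u` gives `U_q(n)`. If `p_q(n) = q * d` with `d < q`,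
take `k a = u + 1` in `q - d` of the subcubes and `k a = u` in the other `d`: the condition then
holds with equality where `k a = u + 1`. Enough clouds are available because `n > q` forces
`1 + n * (q - 1) ≥ q ^ 2 > p_q(n)`, so `H(n) = q * (u + 1) - 1` and `q * M(n-1) ≥ H(n)` gives
`M(n-1) ≥ u + 1`.
-/


/-- `B` is a cloud of length `n` over `Fin q` with root `x`. -/
def IsCloud (q n : ℕ) (x : Fin n → Fin q) (B : Finset (Fin n → Fin q)) : Prop :=
  x ∈ B ∧
  (∀ i : Fin n, ∀ z : Fin q, z ≠ x i →
    ∃! y : Fin n → Fin q, y ∈ B ∧ (∀ j : Fin n, j < i → y j = x j) ∧ y i = z) ∧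
  (∀ y ∈ B, y ≠ x → ∃ i : Fin n,
    (∀ j : Fin n, j < i → y j = x j) ∧ y i ≠ x i)

/-- The words of length `n + 1` that continue with a word of `S a` after their first symbol `a`. -/
def consUnion {q n : ℕ} (S : Fin q → Finset (Fin n → Fin q)) : Finset (Fin (n + 1) → Fin q) :=
  Finset.univ.filter fun y => Fin.tail y ∈ S (y 0)

lemma mem_consUnion {q n : ℕ} {S : Fin q → Finset (Fin n → Fin q)} {y : Fin (n + 1) → Fin q} :
    y ∈ consUnion S ↔ Fin.tail y ∈ S (y 0) := by
  simp [consUnion]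

lemma card_consUnion {q n : ℕ} (S : Fin q → Finset (Fin n → Fin q)) :
    (consUnion S).card = ∑ a, (S a).card := by
  rw [← Finset.card_sigma]
  refine Finset.card_nbij' (fun y => ⟨y 0, Fin.tail y⟩) (fun p => Fin.cons p.1 p.2) ?_ ?_ ?_ ?_
  · intro y hy
    simpa [mem_consUnion] using hy
  · intro p hp
    simpa [mem_consUnion] using hp
  · intro y _
    simp
  · intro p _
    simp

/-- A cloud in one subcube together with one word from each other subcube is a cloud. -/
lemma isCloud_consUnion {q n : ℕ} (a : Fin q) {x : Fin n → Fin q} {B : Finset (Fin n → Fin q)}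
    (hB : IsCloud q n x B) (g : Fin q → Fin n → Fin q) :
    IsCloud q (n + 1) (Fin.cons a x) (consUnion fun z => if z = a then B else {g z}) := by
  obtain ⟨hx, hex, hmem⟩ := hB
  refine ⟨by simpa [mem_consUnion] using hx, ?_, ?_⟩
  · intro i z hz
    induction i using Fin.cases with
    | zero =>
      have hz' : z ≠ a := by simpa using hz
      refine ⟨Fin.cons z (g z), ⟨by simp [mem_consUnion, hz'], by simp, by simp⟩, ?_⟩
      rintro y ⟨hy, -, hy0⟩
      subst hy0
      rw [mem_consUnion, if_neg hz', Finset.mem_singleton] at hy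
      rw [← hy, Fin.cons_self_tail]
    | succ i =>
      obtain ⟨w, ⟨hwB, hwx, hwi⟩, huniq⟩ := hex i z (by simpa using hz)
      refine ⟨Fin.cons a w, ⟨by simpa [mem_consUnion] using hwB, ?_, by simpa using hwi⟩, ?_⟩
      · intro j hj
        induction j using Fin.cases with
        | zero => simp
        | succ j => simpa using hwx j (by simpa using hj)
      · rintro y ⟨hy, hyx, hyi⟩
        have hy0 : y 0 = a := by simpa using hyx 0 (Fin.succ_pos i)
        rw [mem_consUnion, if_pos hy0] at hy
        have := huniq (Fin.tail y)
          ⟨hy, fun j hj => by simpa [Fin.tail] using hyx j.succ (by simpa using hj), hyi⟩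
        rw [← this, ← hy0, Fin.cons_self_tail]
  · intro y hy hyx
    by_cases hy0 : y 0 = a
    · rw [mem_consUnion, if_pos hy0] at hy
      obtain ⟨i, hi, hne⟩ := hmem (Fin.tail y) hy (by
        rintro rfl
        exact hyx (by rw [← hy0, Fin.cons_self_tail]))
      refine ⟨i.succ, ?_, by simpa [Fin.tail] using hne⟩
      intro j hj
      induction j using Fin.cases with
      | zero => simpa using hy0
      | succ j => simpa [Fin.tail] using hi j (by simpa using hj)
    · exact ⟨0, by simp, by simpa using hy0⟩

/-- The words of subcube `a` outside its `k a` kept clouds suffice to serve all the clouds kept in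
other subcubes. -/
lemma exists_spare_words {q n Mprev M : ℕ} (B : Fin Mprev → Finset (Fin n → Fin q))
    (hcard : ∀ m, (B m).card = 1 + n * (q - 1)) (k : Fin q → ℕ) (hk : ∀ a, k a ≤ Mprev)
    (hM : ∑ a, k a = M) (hfit : ∀ a, M + k a * (n * (q - 1)) ≤ q ^ n) (a : Fin q) :
    ∃ f : {i : (a : Fin q) × Fin (k a) // i.1 ≠ a} → Fin n → Fin q,
      Function.Injective f ∧ ∀ i, ∀ m : Fin (k a), f i ∉ B (Fin.castLE (hk a) m) := by
  classical
  set used : Finset (Fin n → Fin q) :=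
    Finset.univ.biUnion fun m : Fin (k a) => B (Fin.castLE (hk a) m) with hused
  have hu : used.card ≤ k a * (1 + n * (q - 1)) := by
    refine Finset.card_biUnion_le.trans ?_
    simp [hcard]
  have hI : Fintype.card {i : (a : Fin q) × Fin (k a) // i.1 ≠ a} = M - k a := by
    have h1 : Fintype.card {i : (a : Fin q) × Fin (k a) // i.1 = a} = k a := by
      rw [Fintype.card_congr (Equiv.sigmaSubtype (β := fun a => Fin (k a)) a), Fintype.card_fin]
    have h2 := Fintype.card_subtype_compl fun i : (a : Fin q) × Fin (k a) => i.1 = a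
    rw [h1, Fintype.card_sigma] at h2
    simpa [hM] using h2
  have hc : usedᶜ.card = q ^ n - used.card := by
    rw [Finset.card_compl]
    simp
  have hle : Fintype.card {i : (a : Fin q) × Fin (k a) // i.1 ≠ a} ≤ Fintype.card ↥(usedᶜ) := by
    rw [hI, Fintype.card_coe, hc]
    have := hfit a
    rw [mul_add, mul_one] at hu
    omega
  obtain ⟨e⟩ := Function.Embedding.nonempty_of_card_le hle
  refine ⟨fun i => (e i).1, fun i j hij => e.injective (Subtype.ext hij), fun i m hm => ?_⟩
  have hmem := (e i).2
  rw [Finset.mem_compl] at hmem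
  exact hmem (Finset.mem_biUnion.2 ⟨m, Finset.mem_univ _, hm⟩)

/-- Clouds of length `n + 1` can be built with `k a` roots in subcube `a`, provided the words of
each subcube suffice: `k a * (1 + n * (q - 1)) + (M - k a) ≤ q ^ n`. -/
lemma exists_clouds_succ {q n Mprev M : ℕ} (B : Fin Mprev → Finset (Fin n → Fin q))
    (hcloud : ∀ m, ∃ x, IsCloud q n x (B m)) (hcard : ∀ m, (B m).card = 1 + n * (q - 1))
    (hdisj : ∀ m m', m ≠ m' → Disjoint (B m) (B m')) (k : Fin q → ℕ) (hk : ∀ a, k a ≤ Mprev)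
    (hM : ∑ a, k a = M) (hfit : ∀ a, M + k a * (n * (q - 1)) ≤ q ^ n) :
    ∃ C : Fin M → Finset (Fin (n + 1) → Fin q),
      (∀ m, ∃ x, IsCloud q (n + 1) x (C m)) ∧
      (∀ m, (C m).card = 1 + (n + 1) * (q - 1)) ∧
      ∀ m m', m ≠ m' → Disjoint (C m) (C m') := by
  classical
  choose f hinj hf using exists_spare_words B hcard k hk hM hfit
  let e : Fin M ≃ (a : Fin q) × Fin (k a) :=
    (Fintype.equivFinOfCardEq (by simp [hM])).symm
  choose x hx using hcloud
  let g : ((a : Fin q) × Fin (k a)) → Fin q → Fin n → Fin q := fun i z =>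
    if h : i.1 ≠ z then f z ⟨i, h⟩ else x (Fin.castLE (hk i.1) i.2)
  let C : ((a : Fin q) × Fin (k a)) → Finset (Fin (n + 1) → Fin q) := fun i =>
    consUnion fun z => if z = i.1 then B (Fin.castLE (hk i.1) i.2) else {g i z}
  have hC : ∀ i j, i ≠ j → Disjoint (C i) (C j) := by
    rintro i j hij
    rw [Finset.disjoint_left]
    intro y hyi hyj
    simp only [C, mem_consUnion] at hyi hyj
    by_cases h1 : y 0 = i.1 <;> by_cases h2 : y 0 = j.1
    · rw [if_pos h1] at hyi
      rw [if_pos h2] at hyj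
      obtain ⟨a, m⟩ := i
      obtain ⟨b, m'⟩ := j
      obtain rfl : a = b := h1.symm.trans h2
      refine Finset.disjoint_left.1 (hdisj _ _ fun h => hij ?_) hyi hyj
      exact congrArg (Sigma.mk a) (Fin.castLE_inj.1 h)
    · rw [if_pos h1] at hyi
      rw [if_neg h2, Finset.mem_singleton] at hyj
      have h3 : j.1 ≠ i.1 := fun h => h2 (h1.trans h.symm)
      rw [hyj, h1] at hyi
      simp only [g, dif_pos h3] at hyi
      exact hf _ _ _ hyi
    · rw [if_pos h2] at hyj
      rw [if_neg h1, Finset.mem_singleton] at hyi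
      have h3 : i.1 ≠ j.1 := fun h => h1 (h2.trans h.symm)
      rw [hyi, h2] at hyj
      simp only [g, dif_pos h3] at hyj
      exact hf _ _ _ hyj
    · rw [if_neg h1, Finset.mem_singleton] at hyi
      rw [if_neg h2, Finset.mem_singleton] at hyj
      have h3 := hyi.symm.trans hyj
      simp only [g, dif_pos (Ne.symm h1), dif_pos (Ne.symm h2)] at h3
      exact hij (congrArg Subtype.val (hinj _ h3))
  refine ⟨fun m => C (e m), fun m => ⟨_, isCloud_consUnion _ (hx _) _⟩, fun m => ?_,
    fun m m' h => hC _ _ fun h' => h (e.injective h')⟩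
  simp only [C, card_consUnion]
  rw [Fintype.sum_eq_add_sum_compl (e m).1, if_pos rfl, hcard,
    Finset.sum_congr rfl (g := fun _ => 1) (fun z hz => by
      rw [if_neg (by simpa using hz), Finset.card_singleton])]
  rw [Finset.sum_const, Finset.card_compl]
  simp
  ring

/-- Non-binary DADA, complete-feedback step. -/
theorem dada_complete_feedback_step (q n Mprev : ℕ) (hq : 2 ≤ q) (hn : q < n)
    (h : ∃ B : Fin Mprev → Finset (Fin (n - 1) → Fin q),
      (∀ m, ∃ x, IsCloud q (n - 1) x (B m)) ∧
      (∀ m, (B m).card = 1 + (n - 1) * (q - 1)) ∧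
      ∀ m m', m ≠ m' → Disjoint (B m) (B m')) :
    ∃ B : Fin (dadaSize q n Mprev) → Finset (Fin n → Fin q),
      (∀ m, ∃ x, IsCloud q n x (B m)) ∧
      (∀ m, (B m).card = 1 + n * (q - 1)) ∧
      ∀ m m', m ≠ m' → Disjoint (B m) (B m') := by
  obtain ⟨n, rfl⟩ : ∃ n', n = n' + 1 := ⟨n - 1, by omega⟩
  obtain ⟨r, rfl⟩ : ∃ r, q = r + 1 := ⟨q - 1, by omega⟩
  obtain ⟨B, hcloud, hcard, hdisj⟩ := h
  set P := (r + 1) ^ n with hP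
  set N := 1 + (n + 1) * r with hN
  have hN0 : 0 < N := by omega
  have hNk : ∀ k, (r + 1) * k + k * (n * r) = k * N := fun k => by rw [hN]; ring
  set u := P / N with hu
  have hH : Hb (r + 1) (n + 1) = (r + 1) * P / N := by
    rw [Hb, pow_succ', Nat.add_sub_cancel]
  have hU : Uq (r + 1) (n + 1) = (r + 1) * u := by
    rw [Uq, pow_succ', Nat.add_sub_cancel, Nat.mul_div_mul_left _ _ (Nat.succ_pos r)]
  have huP : u * N ≤ P := Nat.div_mul_le_self P N
  have hPu : P < N * (u + 1) := Nat.lt_mul_div_succ P hN0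
  obtain ⟨d, hd⟩ : ∃ d, N * (u + 1) = P + d := ⟨N * (u + 1) - P, by omega⟩
  have hp : pq (r + 1) (n + 1) = (r + 1) * d := by
    have : N * ((r + 1) * u + (r + 1)) = (r + 1) * P + (r + 1) * d := by
      rw [← mul_add, ← hd]; ring
    rw [pq, hU, Nat.add_sub_cancel, pow_succ', this]
    exact Nat.add_sub_cancel_left ..
  have hconst : ∀ k, k ≤ Mprev → k * N ≤ P → _ := fun k hk hkN =>
    exists_clouds_succ (n := n) (M := (r + 1) * k) B hcloud hcard hdisj (fun _ => k) (fun _ => hk)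
      (by simp) (fun _ => (hNk k).trans_le hkN)
  have huM : ¬ (r + 1) * Mprev < (r + 1) * P / N → u ≤ Mprev := by
    intro h1
    have h2 : (r + 1) * u ≤ (r + 1) * P / N := by
      rw [Nat.le_div_iff_mul_le hN0, mul_assoc]
      exact Nat.mul_le_mul_left _ huP
    exact Nat.le_of_mul_le_mul_left (h2.trans (not_lt.1 h1)) (Nat.succ_pos r)
  obtain ⟨M, hM⟩ : ∃ M, M = dadaSize (r + 1) (n + 1) Mprev := ⟨_, rfl⟩
  rw [← hM]
  rw [dadaSize, hH, hp, hU] at hM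
  split_ifs at hM with h1 h2 <;> subst hM
  · refine hconst Mprev le_rfl ?_
    have h3 := (Nat.le_div_iff_mul_le hN0).1 h1.le
    rw [mul_assoc] at h3
    exact Nat.le_of_mul_le_mul_left h3 (Nat.succ_pos r)
  · exact hconst u (huM h1) huP
  · have hdq : d < r + 1 := by
      rw [sq] at h2
      exact lt_of_mul_lt_mul_left (not_le.1 h2) (Nat.zero_le _)
    have hd0 : 0 < d := by omega
    rw [Nat.mul_div_cancel_left _ (Nat.succ_pos r)]
    have huM1 : u + 1 ≤ Mprev := by
      -- `p < q ^ 2 ≤ N` puts the Hamming bound at `q * (u + 1) - 1`.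
      have h3 : (r + 1) * u + r ≤ (r + 1) * P / N := by
        rw [Nat.le_div_iff_mul_le hN0]
        have h4 : (r + 1) * d ≤ N := by rw [hN]; nlinarith
        have h5 : ((r + 1) * u + r) * N + N = (r + 1) * P + (r + 1) * d := by
          rw [← mul_add, ← hd]; ring
        omega
      have h6 := h3.trans (not_lt.1 h1)
      by_contra h7
      have h8 : (r + 1) * Mprev ≤ (r + 1) * u := Nat.mul_le_mul_left _ (by omega)
      omega
    refine exists_clouds_succ (n := n) B hcloud hcard hdisj
      (fun a => if a.1 < r + 1 - d then u + 1 else u) (fun a => ?_) ?_ (fun a => ?_)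
    · split_ifs <;> omega
    · have h3 : ∀ a : Fin (r + 1), (if a.1 < r + 1 - d then u + 1 else u)
          = u + if a.1 < r + 1 - d then 1 else 0 := fun a => by split_ifs <;> rfl
      rw [Finset.sum_congr rfl fun a _ => h3 a, Finset.sum_add_distrib, Finset.sum_boole,
        Fin.card_filter_val_lt]
      simp
      omega
    · have h3 : (if a.1 < r + 1 - d then u + 1 else u) * (n * r) ≤ (u + 1) * (n * r) :=
        Nat.mul_le_mul_right _ (by split_ifs <;> omega)
      have h4 := hNk (u + 1)
      rw [mul_comm (u + 1) N, hd, mul_add (r + 1), mul_one] at h4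
      rw [Nat.add_sub_cancel]
      omega
end

section
/- Let q ≥ 2 and n ≥ q + 1. Then there exists a q-ary single-error-correcting code of length n with complete feedback and M_cf(n) messages, i.e., a family of M_cf(n) pairwise disjoint clouds in (Fin n → Fin q). -/
/-- A `q`-ary single-error-correcting code of length `n` with complete feedback and
`M` messages: a family of `M` pairwise disjoint clouds. -/
def CompleteFeedbackCode (q n M : ℕ) : Prop :=
  ∃ B : Fin M → Finset (Fin n → Fin q),
    (∀ m : Fin M, ∃ x : Fin n → Fin q, IsCloud q n x (B m)) ∧
    ∀ m m' : Fin M, m ≠ m' → Disjoint (B m) (B m')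

/-- The optimal complete-feedback size `M_cf(n)`. -/
def Mcf (q n : ℕ) : ℕ :=
  if q ^ 2 ≤ pq q n then Uq q n else Uq q n + q - pq q n / q

open Finset

/-- The labels in `A` and `B` can be placed on the words of length `k` so that every label of `A`
occupies a cloud and every label of `B` occupies exactly one word. The placement is a partial
labelling `f` of the words, so that disjointness of the occupied sets is automatic. The last clause
in the definition of a cloud (every other word first departs from the root somewhere) holds
for every set of words and is omitted. -/
def Layout (q k : ℕ) (A B : Finset ℕ) : Prop :=
  ∃ f : (Fin k → Fin q) → Option ℕ,
    (∀ w t, f w = some t → t ∈ A ∨ t ∈ B) ∧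
    (∀ t ∈ A, ∃ x, f x = some t ∧ ∀ i : Fin k, ∀ z, z ≠ x i →
      ∃! y, f y = some t ∧ (∀ j : Fin k, j < i → y j = x j) ∧ y i = z) ∧
    ∀ t ∈ B, ∃! w, f w = some t

/-- Every demand of at most `a` clouds and some single words that satisfies the volume bound in
length `k` can be met. -/
def Packs (q k a : ℕ) : Prop :=
  ∀ A B : Finset ℕ, Disjoint A B → #A ≤ a → #A * (1 + k * (q - 1)) + #B ≤ q ^ k → Layout q k A B

/-! ### The recursion on the length -/

lemma exists_distribution {q : ℕ} (hq : 0 < q) (A : Finset ℕ) (e : Fin q → ℕ)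
    (h : #A ≤ ∑ z, e z) : ∃ c : ℕ → Fin q, ∀ z, #{t ∈ A | c t = z} ≤ e z := by
  have hc : Fintype.card A ≤ Fintype.card (Σ z, Fin (e z)) := by simpa using h
  obtain ⟨g⟩ := Function.Embedding.nonempty_of_card_le hc
  refine ⟨fun t => if ht : t ∈ A then (g ⟨t, ht⟩).1 else ⟨0, hq⟩, fun z => ?_⟩
  have key : Fintype.card {t // t ∈ ({t ∈ A | (if ht : t ∈ A then (g ⟨t, ht⟩).1 else ⟨0, hq⟩) = z})}
      ≤ Fintype.card (Fin (e z)) := by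
    have hm : ∀ t : {t // t ∈ ({t ∈ A | (if ht : t ∈ A then (g ⟨t, ht⟩).1 else ⟨0, hq⟩) = z})},
        ∃ i : Fin (e z), ∃ ht : t.1 ∈ A, g ⟨t.1, ht⟩ = ⟨z, i⟩ := by
      rintro ⟨t, ht⟩
      rw [mem_filter] at ht
      obtain ⟨h1, h2⟩ := ht
      rw [dif_pos h1] at h2
      subst h2
      exact ⟨_, h1, rfl⟩
    choose i hA hi using hm
    refine Fintype.card_le_of_injective i fun s t hst => ?_
    have : g ⟨s.1, hA s⟩ = g ⟨t.1, hA t⟩ := by rw [hi, hi, hst]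
    exact Subtype.ext (Subtype.mk.inj (g.injective this))
  simpa using key

lemma Packs.mono {q k a b : ℕ} (h : Packs q k a) (hb : b ≤ a) : Packs q k b :=
  fun A B hAB hA hv => h A B hAB (hA.trans hb) hv

lemma packs_zero (q : ℕ) : Packs q 0 1 := by
  intro A B _ _ hv
  simp only [zero_mul, add_zero, mul_one, pow_zero] at hv
  rcases A.eq_empty_or_nonempty with rfl | ⟨t, ht⟩
  · rcases B.eq_empty_or_nonempty with rfl | ⟨t, ht⟩
    · exact ⟨fun _ => none, by simp, by simp, by simp⟩
    · have hB : #B ≤ 1 := by simpa using hv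
      refine ⟨fun _ => some t, by simp [ht], by simp, fun s hs => ?_⟩
      rw [card_le_one.1 hB s hs t ht]
      exact ⟨Fin.elim0, rfl, fun _ _ => Subsingleton.elim _ _⟩
  · have hA : 0 < #A := card_pos.2 ⟨t, ht⟩
    have hB : B = ∅ := card_eq_zero.1 (by omega)
    subst hB
    have hA : #A ≤ 1 := by simpa using hv
    refine ⟨fun _ => some t, by simp [ht], fun s hs => ?_, by simp⟩
    rw [card_le_one.1 hA s hs t ht]
    exact ⟨Fin.elim0, rfl, fun i => i.elim0⟩

/-- Layouts of the `q` subtrees glue to a layout of the tree: `c` names the child containing the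
root of a cloud, and `d` the child receiving a single word. -/
lemma layout_glue {q k : ℕ} {A B : Finset ℕ} (hAB : Disjoint A B) (c d : ℕ → Fin q)
    (h : ∀ z, Layout q k {t ∈ A | c t = z} ({t ∈ A | c t ≠ z} ∪ {t ∈ B | d t = z})) :
    Layout q (k + 1) A B := by
  choose f hf hfA hfB using h
  have hcons : ∀ y : Fin (k + 1) → Fin q, Fin.cons (y 0) (Fin.tail y) = y := Fin.cons_self_tail
  refine ⟨fun w => f (w 0) (Fin.tail w), ?_, ?_, ?_⟩
  · intro w t hw
    have := hf _ _ _ hw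
    simp only [mem_filter, mem_union] at this
    tauto
  · intro t ht
    obtain ⟨x, hx, hcl⟩ := hfA (c t) t (by simp [ht])
    refine ⟨Fin.cons (c t) x, by simpa using hx, fun i => ?_⟩
    refine Fin.cases (fun z hz => ?_) (fun i z hz => ?_) i
    · obtain ⟨w, hw, hu⟩ := hfB z t (by
        simp only [Fin.cons_zero] at hz
        simp [ht, hz.symm])
      refine ⟨Fin.cons z w, ⟨by simpa using hw, by simp, by simp⟩, ?_⟩
      rintro y ⟨hy, -, rfl⟩
      rw [← hu _ hy]
      exact (hcons y).symm
    · obtain ⟨w, ⟨hw, hp, hwi⟩, hu⟩ := hcl i z (by simpa using hz)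
      refine ⟨Fin.cons (c t) w, ⟨by simpa using hw, ?_, by simpa using hwi⟩, ?_⟩
      · intro j
        refine Fin.cases (by simp) (fun j hj => ?_) j
        simpa using hp j (by simpa using hj)
      · rintro y ⟨hy, hyp, hyz⟩
        have h0 : y 0 = c t := by simpa using hyp 0 (Fin.succ_pos i)
        have h1 : Fin.tail y = w := by
          refine hu _ ⟨by simpa [h0] using hy, fun j hj => ?_, hyz⟩
          simpa [Fin.tail] using hyp j.succ (by simpa using hj)
        rw [← h0, ← h1]
        exact (hcons y).symm
  · intro t ht
    have htA : t ∉ A := fun h => disjoint_left.1 hAB h ht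
    obtain ⟨w, hw, hu⟩ := hfB (d t) t (by simp [ht])
    refine ⟨Fin.cons (d t) w, by simpa using hw, fun y hy => ?_⟩
    have hm := hf _ _ _ hy
    simp only [mem_filter, mem_union, htA, ht, false_and, true_and, false_or] at hm
    have h1 : Fin.tail y = w := hu _ (by simpa [hm] using hy)
    rw [hm, ← h1]
    exact (hcons y).symm

/-- One step of the recursion. The second hypothesis allows each child to receive at most `a` of
the `b` clouds; by the third, such a child does not overflow. -/
lemma Packs.step {q k a b : ℕ} (hq : 0 < q) (h : Packs q k a) (hba : b ≤ q * a)
    (hv : b + a * (k * (q - 1)) ≤ q ^ k) : Packs q (k + 1) b := by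
  intro A B hAB hA hvol
  obtain ⟨c, hc⟩ := exists_distribution hq A (fun _ => a) (by simpa using hA.trans hba)
  have hroom : ∀ z, #A + #{t ∈ A | c t = z} * (k * (q - 1)) ≤ q ^ k := fun z =>
    (add_le_add hA (Nat.mul_le_mul_right _ (hc z))).trans hv
  -- `e z` is the room left in child `z` after all demands coming from `A` are accounted for
  choose e he using fun z => Nat.exists_eq_add_of_le (hroom z)
  have hsumA : ∑ z, #{t ∈ A | c t = z} = #A :=
    (card_eq_sum_card_fiberwise (fun t _ => mem_coe.2 (mem_univ (c t)))).symm
  have hsum : q * q ^ k = q * #A + #A * (k * (q - 1)) + ∑ z, e z := by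
    have := Finset.sum_congr (rfl : (univ : Finset (Fin q)) = univ) (fun z _ => he z)
    simpa [sum_add_distrib, ← sum_mul, hsumA] using this
  obtain ⟨r, rfl⟩ : ∃ r, q = r + 1 := ⟨q - 1, by omega⟩
  simp only [Nat.add_sub_cancel] at *
  have hB : #B ≤ ∑ z, e z := by
    rw [pow_succ] at hvol
    nlinarith
  obtain ⟨d, hd⟩ := exists_distribution hq B e hB
  refine layout_glue hAB c d fun z => h _ _ ?_ (hc z) ?_
  · rw [disjoint_left]
    intro t ht
    simp only [mem_filter, mem_union] at ht ⊢
    have := disjoint_left.1 hAB ht.1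
    tauto
  · have h1 : #{t ∈ A | c t = z} + #{t ∈ A | c t ≠ z} = #A :=
      card_filter_add_card_filter_not _
    have h2 := card_union_le {t ∈ A | c t ≠ z} {t ∈ B | d t = z}
    have h3 := hd z
    have h4 := he z
    simp only [Nat.add_sub_cancel]
    nlinarith

lemma Packs.completeFeedbackCode {q n M : ℕ} (h : Packs q n M)
    (hM : M * (1 + n * (q - 1)) ≤ q ^ n) : CompleteFeedbackCode q n M := by
  obtain ⟨f, -, hf, -⟩ := h (range M) ∅ (disjoint_empty_right _) (by simp) (by simpa using hM)
  refine ⟨fun m => {w | f w = some m.1}, fun m => ?_, fun m m' hm => ?_⟩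
  · obtain ⟨x, hx, hcl⟩ := hf m (by simp)
    refine ⟨x, by simpa using hx, fun i z hz => by simpa using hcl i z hz, fun y _ hyx => ?_⟩
    -- the first coordinate in which `y` differs from `x`
    obtain ⟨i, hi⟩ := Function.ne_iff.1 hyx
    obtain ⟨j, hj, hmin⟩ := WellFounded.has_min (wellFounded_lt (α := Fin n)) {i | y i ≠ x i} ⟨i, hi⟩
    exact ⟨j, fun l hl => by_contra fun hne => hmin l hne hl, hj⟩
  · rw [disjoint_left]
    intro w hw hw'
    simp only [mem_filter, mem_univ, true_and] at hw hw'
    rw [hw] at hw'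
    exact hm (Fin.ext (Option.some.inj hw'))

/-! ### Numerical part -/

lemma packs_two {q : ℕ} (hq : 2 ≤ q) : Packs q 2 1 := by
  have h1 : Packs q 1 1 := (packs_zero q).step (by omega) (by omega) (by simp)
  exact h1.step (by omega) (by omega) (by simp; omega)

/-- Each step is admissible because `q + k * (q - 1) ≤ q ^ 2` for `k ≤ q`. -/
lemma packs_pow {q : ℕ} (hq : 2 ≤ q) (m : ℕ) (hm : m + 1 ≤ q) : Packs q (m + 2) (q ^ m) := by
  induction m with
  | zero => simpa using packs_two hq
  | succ m ih =>
    refine (ih (by omega)).step (by omega) (by rw [pow_succ, mul_comm]) ?_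
    obtain ⟨r, rfl⟩ : ∃ r, q = r + 1 := ⟨q - 1, by omega⟩
    simp only [Nat.add_sub_cancel]
    have h1 : (m + 2) * r ≤ (r + 1) * r := Nat.mul_le_mul_right _ (by omega)
    calc (r + 1) ^ (m + 1) + (r + 1) ^ m * ((m + 2) * r)
        ≤ (r + 1) ^ (m + 1) + (r + 1) ^ m * ((r + 1) * r) := by gcongr
      _ = (r + 1) ^ (m + 2) := by ring

/-- The value `Mcf q n` is obtained from `a ≤ q ^ (n - 1) / D + 1` by one step of the recursion,
where `D = 1 + n * (q - 1)`. -/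
lemma Mcf_last_step {q k : ℕ} (hq : 2 ≤ q) :
    ∃ a, a ≤ q ^ k / (1 + (k + 1) * (q - 1)) + 1 ∧ Mcf q (k + 1) ≤ q * a ∧
      Mcf q (k + 1) + a * (k * (q - 1)) ≤ q ^ k := by
  obtain ⟨r, rfl⟩ : ∃ r, q = r + 1 := ⟨q - 1, by omega⟩
  have hU : Uq (r + 1) (k + 1) = (r + 1) * ((r + 1) ^ k / (1 + (k + 1) * r)) := by
    rw [Uq, pow_succ', Nat.mul_div_mul_left _ _ (by omega), Nat.add_sub_cancel]
  simp only [Nat.add_sub_cancel] at *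
  have hD : 0 < 1 + (k + 1) * r := by omega
  have h1 := Nat.div_mul_le_self ((r + 1) ^ k) (1 + (k + 1) * r)
  have h2 := Nat.lt_div_mul_add hD (a := (r + 1) ^ k)
  generalize (r + 1) ^ k / (1 + (k + 1) * r) = X at *
  have h3 : (r + 1) ^ k ≤ (X + 1) * (1 + (k + 1) * r) := by nlinarith
  obtain ⟨s, hs⟩ := Nat.exists_eq_add_of_le h3
  have hp : pq (r + 1) (k + 1) = (r + 1) * s := by
    rw [pq, hU, Nat.add_sub_cancel, pow_succ]
    apply Nat.sub_eq_of_eq_add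
    linear_combination (r + 1) * hs
  rw [Mcf, hp, hU, Nat.mul_div_cancel_left _ (by omega)]
  split_ifs with hc
  · exact ⟨X, by omega, le_rfl, le_trans (by apply le_of_eq; ring) h1⟩
  · have hsr : s < r + 1 := by
      by_contra hn
      exact hc (by nlinarith)
    have hle : s ≤ (r + 1) * X + (r + 1) := hsr.le.trans (Nat.le_add_left _ _)
    refine ⟨X + 1, le_rfl, (Nat.sub_le _ _).trans (by apply le_of_eq; ring), ?_⟩
    zify [hle] at hs ⊢
    linarith

lemma Mcf_mul_le {q k : ℕ} (hq : 2 ≤ q) :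
    Mcf q (k + 1) * (1 + (k + 1) * (q - 1)) ≤ q ^ (k + 1) := by
  obtain ⟨a, -, h1, h2⟩ := Mcf_last_step (k := k) hq
  obtain ⟨r, rfl⟩ : ∃ r, q = r + 1 := ⟨q - 1, by omega⟩
  simp only [Nat.add_sub_cancel] at *
  generalize Mcf (r + 1) (k + 1) = M at *
  calc M * (1 + (k + 1) * r) = (r + 1) * M + M * (k * r) := by ring
    _ ≤ (r + 1) * M + (r + 1) * a * (k * r) := by gcongr
    _ = (r + 1) * (M + a * (k * r)) := by ring
    _ ≤ (r + 1) * (r + 1) ^ k := by gcongr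
    _ = (r + 1) ^ (k + 1) := by ring

/-- The growth condition used in `packs_floor` is inherited by all larger `k`. -/
lemma growth {q k₀ : ℕ} (hq : 2 ≤ q) (hk₀ : 1 ≤ k₀)
    (h : (1 + (k₀ + 2) * (q - 1)) * (1 + k₀ * (q - 1)) ≤ (q - 1) * q ^ k₀) (k : ℕ) (hk : k₀ ≤ k) :
    (1 + (k + 2) * (q - 1)) * (1 + k * (q - 1)) ≤ (q - 1) * q ^ k := by
  obtain ⟨r, rfl⟩ : ∃ r, q = r + 1 := ⟨q - 1, by omega⟩
  simp only [Nat.add_sub_cancel] at *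
  induction k, hk using Nat.le_induction with
  | base => exact h
  | succ k hk ih =>
    have hx : 2 ≤ 1 + k * r := by nlinarith [Nat.mul_le_mul (hk₀.trans hk) (by omega : 1 ≤ r)]
    have key : (1 + (k + 1 + 2) * r) * (1 + (k + 1) * r)
        ≤ (r + 1) * ((1 + (k + 2) * r) * (1 + k * r)) := by
      -- with `x = 1 + k * r` this is `(x + 3 r) (x + r) ≤ (r + 1) (x + 2 r) x`
      have e1 : (1 + (k + 1 + 2) * r) * (1 + (k + 1) * r)
        = (1 + k * r + 3 * r) * (1 + k * r + r) := by ring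
      have e2 : (1 + (k + 2) * r) * (1 + k * r) = (1 + k * r + 2 * r) * (1 + k * r) := by ring
      rw [e1, e2]
      generalize 1 + k * r = x at *
      have a1 : r * (2 * x) ≤ r * (x * x) := by gcongr
      have a2 : r * r * (2 * 2) ≤ r * r * (2 * x) := by gcongr
      nlinarith
    calc _ ≤ _ := key
      _ ≤ (r + 1) * (r * (r + 1) ^ k) := by gcongr
      _ = r * (r + 1) ^ (k + 1) := by ring

/-- With `D = 1 + n * (q - 1)`, the recursion can be followed along `q ^ k / D + 1` as long as
`k < n`. -/
lemma packs_floor {q n k₀ : ℕ} (hq : 2 ≤ q)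
    (hg : ∀ k, k₀ ≤ k → (1 + (k + 2) * (q - 1)) * (1 + k * (q - 1)) ≤ (q - 1) * q ^ k)
    (h₀ : Packs q k₀ (q ^ k₀ / (1 + n * (q - 1)) + 1)) (k : ℕ) (hk : k₀ ≤ k) (hkn : k < n) :
    Packs q k (q ^ k / (1 + n * (q - 1)) + 1) := by
  induction k, hk using Nat.le_induction with
  | base => exact h₀
  | succ k hk ih =>
    have hD : 0 < 1 + n * (q - 1) := by omega
    refine (ih (by omega)).step (by omega) ?_ ?_
    · rw [Nat.succ_le_iff, Nat.div_lt_iff_lt_mul hD, pow_succ', mul_assoc]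
      refine Nat.mul_lt_mul_of_pos_left ?_ (by omega)
      rw [add_mul, one_mul]
      exact Nat.lt_div_mul_add hD
    · obtain ⟨m, rfl⟩ : ∃ m, n = k + 2 + m := Nat.exists_eq_add_of_le (by omega)
      obtain ⟨r, rfl⟩ : ∃ r, q = r + 1 := ⟨q - 1, by omega⟩
      have hgk := hg k hk
      simp only [Nat.add_sub_cancel] at *
      have h1 := Nat.div_mul_le_self ((r + 1) ^ k) (1 + (k + 2 + m) * r)
      have h2 := Nat.div_mul_le_self ((r + 1) ^ (k + 1)) (1 + (k + 2 + m) * r)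
      generalize (r + 1) ^ k / (1 + (k + 2 + m) * r) = X at *
      generalize (r + 1) ^ (k + 1) / (1 + (k + 2 + m) * r) = Y at *
      have hm : (1 + (k + 2 + m) * r) * (1 + k * r) ≤ (m + 1) * (r * (r + 1) ^ k) :=
        calc (1 + (k + 2 + m) * r) * (1 + k * r)
            ≤ ((m + 1) * (1 + (k + 2) * r)) * (1 + k * r) := by
              gcongr
              nlinarith [Nat.zero_le (m * k * r), Nat.zero_le (m * r)]
          _ = (m + 1) * ((1 + (k + 2) * r) * (1 + k * r)) := by ring
          _ ≤ _ := by gcongr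
      rw [pow_succ] at h2
      refine Nat.le_of_mul_le_mul_right ?_ hD
      calc (Y + 1 + (X + 1) * (k * r)) * (1 + (k + 2 + m) * r)
          = Y * (1 + (k + 2 + m) * r) + X * (1 + (k + 2 + m) * r) * (k * r)
            + (1 + (k + 2 + m) * r) * (1 + k * r) := by ring
        _ ≤ (r + 1) ^ k * (r + 1) + (r + 1) ^ k * (k * r) + (m + 1) * (r * (r + 1) ^ k) := by
            gcongr
        _ = (r + 1) ^ k * (1 + (k + 2 + m) * r) := by ring

lemma packs_Mcf_of_growth {q n k₀ : ℕ} (hq : 2 ≤ q) (hn : k₀ < n) (hk₀ : 1 ≤ k₀)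
    (hg : (1 + (k₀ + 2) * (q - 1)) * (1 + k₀ * (q - 1)) ≤ (q - 1) * q ^ k₀)
    (h₀ : Packs q k₀ (q ^ k₀ / (1 + n * (q - 1)) + 1)) : Packs q n (Mcf q n) := by
  obtain ⟨k, rfl⟩ : ∃ k, n = k + 1 := ⟨n - 1, by omega⟩
  obtain ⟨a, ha, h1, h2⟩ := Mcf_last_step (k := k) hq
  exact ((packs_floor hq (growth hq hk₀ hg) h₀ k (by omega) (by omega)).mono ha).step
    (by omega) h1 h2

/-- The floor at `k = q + 1` is below `q ^ (q - 1)`, because `1 + n * (q - 1) > q ^ 2`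
for `n ≥ q + 2`. -/
lemma packs_Mcf_of_three_le {q n : ℕ} (hq : 3 ≤ q) (hn : q + 1 ≤ n) : Packs q n (Mcf q n) := by
  have h₀ : Packs q (q + 1) (q ^ (q - 1)) := by
    have := packs_pow (q := q) (by omega) (q - 1) (by omega)
    rwa [show q - 1 + 2 = q + 1 by omega] at this
  have hpow : q ^ (q + 1) = q ^ (q - 1) * q ^ 2 := by
    rw [← pow_add]
    congr 1
    omega
  have hpos : 0 < q ^ (q - 1) := by positivity
  rcases hn.eq_or_lt with rfl | hlt
  · refine h₀.mono ?_
    have h1 := Mcf_mul_le (q := q) (k := q) (by omega)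
    have h2 : 1 + (q + 1) * (q - 1) = q ^ 2 := by
      obtain ⟨r, rfl⟩ : ∃ r, q = r + 1 := ⟨q - 1, by omega⟩
      simp only [Nat.add_sub_cancel]
      ring
    rw [h2, hpow] at h1
    exact Nat.le_of_mul_le_mul_right h1 (by positivity)
  · refine packs_Mcf_of_growth (by omega) hlt (by omega) ?_ (h₀.mono ?_)
    · rw [hpow]
      have h3 : q ^ 2 ≤ q ^ (q - 1) := Nat.pow_le_pow_right (by omega) (by omega)
      obtain ⟨r, rfl⟩ : ∃ r, q = r + 1 := ⟨q - 1, by omega⟩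
      simp only [Nat.add_sub_cancel] at *
      calc (1 + (r + 1 + 1 + 2) * r) * (1 + (r + 1 + 1) * r)
          = (1 + (r + 1 + 1 + 2) * r) * (r + 1) ^ 2 := by ring
        _ ≤ r * (r + 1) ^ 2 * (r + 1) ^ 2 := by
          gcongr
          have : 2 * (r + 1) ^ 2 ≤ r * (r + 1) ^ 2 := by gcongr; omega
          nlinarith
        _ = r * ((r + 1) ^ 2 * (r + 1) ^ 2) := by ring
        _ ≤ r * ((r + 1) ^ r * (r + 1) ^ 2) := by gcongr
    · rw [Nat.succ_le_iff, Nat.div_lt_iff_lt_mul (by omega), hpow]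
      refine Nat.mul_lt_mul_of_pos_left ?_ hpos
      have : (q + 2) * (q - 1) ≤ n * (q - 1) := Nat.mul_le_mul_right _ (by omega)
      obtain ⟨r, rfl⟩ : ∃ r, q = r + 1 := ⟨q - 1, by omega⟩
      simp only [Nat.add_sub_cancel] at *
      nlinarith

/-- For `q = 2` the growth condition holds only from `k = 6` on, where `2 ^ 6 / (1 + n) + 1 ≤ 8`
for `n ≥ 8`. The caps `2 ^ (k - 3)` lead up to this value, and they also contain `Mcf 2 n` for
`4 ≤ n ≤ 7`. -/
lemma packs_Mcf_two {n : ℕ} (hn : 3 ≤ n) : Packs 2 n (Mcf 2 n) := by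
  have h3 : Packs 2 3 2 := (packs_two le_rfl).step (by omega) (by omega) (by norm_num)
  have h4 : Packs 2 4 2 := (h3.mono one_le_two).step (by omega) (by omega) (by norm_num)
  have h5 : Packs 2 5 4 := h4.step (by omega) (by omega) (by norm_num)
  have h6 : Packs 2 6 8 := h5.step (by omega) (by omega) (by norm_num)
  have h7 : Packs 2 7 16 := h6.step (by omega) (by omega) (by norm_num)
  rcases le_or_gt n 7 with hle | hgt
  · interval_cases n
    · exact h3.mono (by decide)
    · exact h4.mono (by decide)
    · exact h5.mono (by decide)
    · exact h6.mono (by decide)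
    · exact h7.mono (by decide)
  · refine packs_Mcf_of_growth le_rfl (k₀ := 6) (by omega) (by omega) (by norm_num) (h6.mono ?_)
    rw [Nat.succ_le_iff, Nat.div_lt_iff_lt_mul (by omega)]
    omega

/-- For `n ≥ q + 1` there exists a complete-feedback single-error-correcting code
with `M_cf(n)` messages. -/
theorem complete_feedback_achieves_Mcf (q n : ℕ) (hq : 2 ≤ q) (hn : q + 1 ≤ n) :
    CompleteFeedbackCode q n (Mcf q n) := by
  have hp : Packs q n (Mcf q n) := by
    rcases hq.eq_or_lt with rfl | h3
    · exact packs_Mcf_two hn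
    · exact packs_Mcf_of_three_le h3 hn
  obtain ⟨k, rfl⟩ : ∃ k, n = k + 1 := ⟨n - 1, by omega⟩
  exact hp.completeFeedbackCode (Mcf_mul_le hq)
end

section
/- Let q > 2 and n ≥ 1 satisfy 2·(q−2)^{n−1} ≥ q^{n−1}. Then the set of all words (Fin n → Fin q) can be partitioned into exactly (q−2)^n singletons {x}, where every entry x i lies in {2, ..., q−1}, together with (q^n − (q−2)^n)/2 pairs {x, y} of the following form: there is a coordinate i such that x j = y j ∈ {2, ..., q−1} for all j < i, x i ∈ {0, 1} and y i = 1 − x i, and x j ∈ {2, ..., q−1} for all j > i (while y j for j > i is arbitrary). Consequently, for the q-ary channel whose only possible errors exchange the symbols 0 and 1, there exists a single-error-correcting code with complete feedback of length n and (q^n + (q−2)^n)/2 messages. -/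
/-!
Call a word *good* if it avoids the symbols `0` and `1`. For a word that is not good, let `i` be
its first coordinate carrying `0` or `1`. Among the tails indexed by `j > i`, the inequality
`q ^ m ≤ 2 (q - 2) ^ m` (which passes from `m = n - 1` to all smaller `m`) says that at least half
are good, so there is an involution `φ i` of the tails matching every tail that is not good with a
good one (`exists_involution`). Flipping `w i` and applying `φ i` to the tail of `w` yields an
involution `σ` of all words whose fixed points are exactly the good words
(`exists_word_involution`). Its orbits are the required partition: by construction one of `w` and
`σ w` has a good tail, which makes the orbit a good pair, and orbit counting gives the
cardinalities. A good singleton and a good pair are both swap clouds, so the parts themselves form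
the code.
-/

/-- A cloud for the `q`-ary channel whose only possible errors exchange the symbols
`0` and `1`: `B` contains the root `x`; for every coordinate `i` with `x i ∈ {0, 1}`
there is exactly one `y ∈ B` agreeing with `x` before position `i` and with
`y i = 1 - x i`; and every element of `B` other than `x` is of this form. -/
def IsSwapCloud (q n : ℕ) (x : Fin n → Fin q) (B : Finset (Fin n → Fin q)) : Prop :=
  x ∈ B ∧
  (∀ i : Fin n, (x i : ℕ) < 2 →
    ∃! y : Fin n → Fin q, y ∈ B ∧ (∀ j : Fin n, j < i → y j = x j) ∧
      (y i : ℕ) = 1 - (x i : ℕ)) ∧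
  (∀ y ∈ B, y ≠ x → ∃ i : Fin n, (x i : ℕ) < 2 ∧
    (∀ j : Fin n, j < i → y j = x j) ∧ (y i : ℕ) = 1 - (x i : ℕ))

/-- A single-error-correcting code with complete feedback for the `0 ↔ 1` swap channel:
a family of pairwise disjoint swap clouds. -/
def SwapFeedbackCode (q n M : ℕ) : Prop :=
  ∃ B : Fin M → Finset (Fin n → Fin q),
    (∀ m : Fin M, ∃ x : Fin n → Fin q, IsSwapCloud q n x (B m)) ∧
    ∀ m m' : Fin M, m ≠ m' → Disjoint (B m) (B m')

/-- A good singleton part: `{x}` with all entries of `x` in `{2, …, q-1}`. -/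
def GoodSingle (q n : ℕ) (P : Finset (Fin n → Fin q)) : Prop :=
  ∃ x : Fin n → Fin q, P = {x} ∧ ∀ i : Fin n, 2 ≤ (x i : ℕ)

/-- A good pair part: `{x, y}` such that for some coordinate `i`, `x` and `y` agree
before `i` with entries in `{2, …, q-1}` there, `x i ∈ {0, 1}`, `y i = 1 - x i`, and
all entries of `x` after `i` lie in `{2, …, q-1}` (the entries of `y` after `i` are
arbitrary). -/
def GoodPair (q n : ℕ) (P : Finset (Fin n → Fin q)) : Prop :=
  ∃ x y : Fin n → Fin q, P = {x, y} ∧ ∃ i : Fin n,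
    (∀ j : Fin n, j < i → x j = y j ∧ 2 ≤ (x j : ℕ)) ∧
    (x i : ℕ) < 2 ∧ (y i : ℕ) = 1 - (x i : ℕ) ∧
    (∀ j : Fin n, i < j → 2 ≤ (x j : ℕ))

/-! ### Involutions on tails -/

/-- If at least half of the points satisfy `P`, each remaining point can be swapped with its own
partner satisfying `P`, all other points being fixed. -/
theorem exists_involution {T : Type*} [Fintype T] (P : T → Prop) [DecidablePred P]
    (h : Fintype.card {t // ¬ P t} ≤ Fintype.card {t // P t}) :
    ∃ φ : T → T, (∀ t, φ (φ t) = t) ∧ ∀ t, P t ∨ P (φ t) := by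
  classical
  obtain ⟨f⟩ := Function.Embedding.nonempty_of_card_le h
  let φ : T → T := fun t =>
    if ht : P t then
      if h2 : ∃ b, f b = ⟨t, ht⟩ then (h2.choose : T) else t
    else (f ⟨t, ht⟩ : T)
  have hneg : ∀ t (ht : ¬ P t), φ t = f ⟨t, ht⟩ := fun t ht => by simp [φ, ht]
  have hf : ∀ b, φ (f b : T) = b := by
    intro b
    have h2 : ∃ b', f b' = ⟨(f b : T), (f b).2⟩ := ⟨b, rfl⟩
    have hb : h2.choose = b := f.injective h2.choose_spec
    have : φ (f b : T) = h2.choose := by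
      simp only [φ]
      rw [dif_pos (f b).2, dif_pos h2]
    rw [this, hb]
  refine ⟨φ, fun t => ?_, fun t => ?_⟩
  · by_cases ht : P t
    · by_cases h2 : ∃ b, f b = ⟨t, ht⟩
      · obtain ⟨b, hb⟩ := h2
        have hb' : (f b : T) = t := by rw [hb]
        rw [← hb', hf, hneg b b.2]
      · have : φ t = t := by
          simp only [φ]
          rw [dif_pos ht, dif_neg h2]
        rw [this, this]
    · rw [hneg t ht, hf]
  · by_cases ht : P t
    · exact Or.inl ht
    · right
      rw [hneg t ht]
      exact (f _).2

theorem card_good_words (q : ℕ) (ι : Type*) [Fintype ι] [DecidableEq ι] :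
    Fintype.card {t : ι → Fin q // ∀ j, 2 ≤ (t j : ℕ)} = (q - 2) ^ Fintype.card ι := by
  have h1 : (Finset.univ.filter fun t : ι → Fin q => ∀ j, 2 ≤ (t j : ℕ)) =
      Fintype.piFinset fun _ => Finset.univ.filter fun a : Fin q => 2 ≤ (a : ℕ) := by
    ext t; simp
  have h2 : (Finset.univ.filter fun a : Fin q => 2 ≤ (a : ℕ)).card = q - 2 := by
    have h3 : (Finset.univ.filter fun a : Fin q => 2 ≤ (a : ℕ)).map Fin.valEmbedding =
        Finset.Ico 2 q := by
      ext a
      simp only [Finset.mem_map, Finset.mem_filter, Finset.mem_univ, true_and,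
        Fin.valEmbedding_apply, Finset.mem_Ico]
      constructor
      · rintro ⟨b, hb, rfl⟩
        exact ⟨hb, b.2⟩
      · rintro ⟨ha, hb⟩
        exact ⟨⟨a, hb⟩, ha, rfl⟩
    rw [← Finset.card_map Fin.valEmbedding, h3, Nat.card_Ico]
  rw [Fintype.card_subtype, h1, Fintype.card_piFinset]
  simp [h2]

theorem pow_cond_mono {q N m : ℕ} (hq : 2 < q) (hm : m ≤ N)
    (h : q ^ N ≤ 2 * (q - 2) ^ N) : q ^ m ≤ 2 * (q - 2) ^ m := by
  obtain ⟨k, rfl⟩ := Nat.exists_eq_add_of_le hm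
  have h1 : (q - 2) ^ k ≤ q ^ k := Nat.pow_le_pow_left (Nat.sub_le _ _) _
  have h2 : 0 < q ^ k := Nat.pow_pos (by omega)
  refine Nat.le_of_mul_le_mul_right ?_ h2
  calc q ^ m * q ^ k = q ^ (m + k) := (pow_add _ _ _).symm
    _ ≤ 2 * (q - 2) ^ (m + k) := h
    _ = 2 * (q - 2) ^ m * (q - 2) ^ k := by rw [pow_add, mul_assoc]
    _ ≤ _ := Nat.mul_le_mul_left _ h1

/-- The involution on the tails behind coordinate `i`. -/
theorem exists_tail_involution {q n : ℕ} (hq : 2 < q)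
    (hcond : q ^ (n - 1) ≤ 2 * (q - 2) ^ (n - 1)) (i : Fin n) :
    ∃ φ : ({j : Fin n // i < j} → Fin q) → ({j : Fin n // i < j} → Fin q),
      (∀ t, φ (φ t) = t) ∧ ∀ t, (∀ j, 2 ≤ (t j : ℕ)) ∨ ∀ j, 2 ≤ (φ t j : ℕ) := by
  apply exists_involution (fun t : {j : Fin n // i < j} → Fin q => ∀ j, 2 ≤ (t j : ℕ))
  have hc : Fintype.card {j : Fin n // i < j} ≤ n - 1 := by
    have h := Fintype.card_subtype_lt (p := fun j : Fin n => i < j) (x := i) (lt_irrefl i)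
    rw [Fintype.card_fin] at h
    omega
  have h := pow_cond_mono hq hc hcond
  rw [Fintype.card_subtype_compl, card_good_words, Fintype.card_fun, Fintype.card_fin]
  omega

/-! ### The involution on words -/

/-- Coordinate `i` is the first one at which `w` carries a symbol `0` or `1`. -/
def IsFirstSwap {q n : ℕ} (w : Fin n → Fin q) (i : Fin n) : Prop :=
  (w i : ℕ) < 2 ∧ ∀ j, j < i → 2 ≤ (w j : ℕ)

theorem IsFirstSwap.unique {q n : ℕ} {w : Fin n → Fin q} {i k : Fin n}
    (hi : IsFirstSwap w i) (hk : IsFirstSwap w k) : i = k := by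
  rcases lt_trichotomy i k with h | h | h
  · have := hk.2 i h; have := hi.1; omega
  · exact h
  · have := hi.2 k h; have := hk.1; omega

theorem exists_isFirstSwap {q n : ℕ} (w : Fin n → Fin q) (h : ¬ ∀ i, 2 ≤ (w i : ℕ)) :
    ∃ i, IsFirstSwap w i := by
  push Not at h
  obtain ⟨i, hi, hmin⟩ := WellFounded.has_min (wellFounded_lt (α := Fin n))
    {i | (w i : ℕ) < 2} h
  exact ⟨i, hi, fun j hj => not_lt.1 fun hlt => hmin j hlt hj⟩

/-- An involution on words that fixes the good words and, on a word with first swap coordinate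
`i`, keeps the prefix, flips coordinate `i`, and never leaves both tails containing a swap
symbol. -/
theorem exists_word_involution {q n : ℕ} (hq : 2 < q)
    (hcond : q ^ (n - 1) ≤ 2 * (q - 2) ^ (n - 1)) :
    ∃ σ : (Fin n → Fin q) → (Fin n → Fin q), (∀ w, σ (σ w) = w) ∧
      (∀ w, (∀ i, 2 ≤ (w i : ℕ)) → σ w = w) ∧
      ∀ w i, IsFirstSwap w i → (∀ j, j < i → σ w j = w j) ∧ (σ w i : ℕ) = 1 - (w i : ℕ) ∧
        ((∀ j, i < j → 2 ≤ (w j : ℕ)) ∨ ∀ j, i < j → 2 ≤ (σ w j : ℕ)) := by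
  classical
  choose φ hφ hφg using fun i : Fin n => exists_tail_involution hq hcond i
  let step : Fin n → (Fin n → Fin q) → (Fin n → Fin q) := fun i w j =>
    if h : i < j then φ i (fun k => w k) ⟨j, h⟩
    else if j = i then ⟨1 - (w i : ℕ), by omega⟩ else w j
  let σ : (Fin n → Fin q) → (Fin n → Fin q) := fun w =>
    if h : ∃ i, IsFirstSwap w i then step h.choose w else w
  have step_tail : ∀ i w, (fun k : {j : Fin n // i < j} => step i w k) =
      φ i (fun k => w k) := by
    intro i w
    funext k
    simp only [step]
    rw [dif_pos k.2]
  have step_self : ∀ i w, (step i w i : ℕ) = 1 - (w i : ℕ) := by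
    intro i w
    simp [step]
  have step_lt : ∀ i w j, j < i → step i w j = w j := by
    intro i w j hj
    simp only [step]
    rw [dif_neg hj.not_gt, if_neg hj.ne]
  have hσ : ∀ w i, IsFirstSwap w i → σ w = step i w := by
    intro w i hi
    have h : ∃ i, IsFirstSwap w i := ⟨i, hi⟩
    simp only [σ]
    rw [dif_pos h, h.choose_spec.unique hi]
  have hgood : ∀ w, (∀ i, 2 ≤ (w i : ℕ)) → σ w = w := by
    intro w hw
    have h : ¬ ∃ i, IsFirstSwap w i := by
      rintro ⟨i, hi⟩
      exact absurd hi.1 (not_lt.2 (hw i))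
    simp only [σ]
    rw [dif_neg h]
  refine ⟨σ, fun w => ?_, hgood, fun w i hi => ?_⟩
  · by_cases hw : ∀ i, 2 ≤ (w i : ℕ)
    · rw [hgood w hw, hgood w hw]
    · obtain ⟨i, hi⟩ := exists_isFirstSwap w hw
      have hi' : IsFirstSwap (step i w) i := by
        refine ⟨by rw [step_self]; omega, fun j hj => ?_⟩
        rw [step_lt i w j hj]
        exact hi.2 j hj
      rw [hσ w i hi, hσ _ i hi']
      funext j
      rcases lt_trichotomy j i with h | h | h
      · rw [step_lt _ _ _ h, step_lt _ _ _ h]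
      · subst h
        apply Fin.ext
        rw [step_self, step_self]
        have := hi.1
        omega
      · have h1 := congrFun (step_tail i (step i w)) ⟨j, h⟩
        rw [step_tail, hφ] at h1
        exact h1
  · rw [hσ w i hi]
    refine ⟨step_lt i w, step_self i w, ?_⟩
    rcases hφg i (fun k => w k) with h | h
    · exact Or.inl fun j hj => h ⟨j, hj⟩
    · right
      intro j hj
      have h1 := h ⟨j, hj⟩
      rw [← step_tail] at h1
      exact h1

/-! ### Good parts are clouds -/

theorem GoodSingle.isSwapCloud {q n : ℕ} {P : Finset (Fin n → Fin q)} (h : GoodSingle q n P) :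
    ∃ x, IsSwapCloud q n x P := by
  obtain ⟨x, rfl, hx⟩ := h
  refine ⟨x, by simp, fun i hi => absurd hi (not_lt.2 (hx i)), fun y hy hne => ?_⟩
  exact absurd (Finset.mem_singleton.1 hy) hne

theorem GoodPair.isSwapCloud {q n : ℕ} {P : Finset (Fin n → Fin q)} (h : GoodPair q n P) :
    ∃ x, IsSwapCloud q n x P := by
  obtain ⟨x, y, rfl, i, hpre, hxi, hyi, htail⟩ := h
  refine ⟨x, by simp, fun k hk => ?_, fun z hz hne => ?_⟩
  · have hki : k = i := by
      rcases lt_trichotomy k i with h | h | h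
      · have := (hpre k h).2; omega
      · exact h
      · have := htail k h; omega
    subst hki
    refine ⟨y, ⟨by simp, fun j hj => (hpre j hj).1.symm, hyi⟩, ?_⟩
    rintro z ⟨hz, -, hzk⟩
    rcases Finset.mem_insert.1 hz with rfl | hz
    · omega
    · exact Finset.mem_singleton.1 hz
  · have hzy : z = y := by
      rcases Finset.mem_insert.1 hz with h | h
      · exact absurd h hne
      · exact Finset.mem_singleton.1 h
    subst hzy
    exact ⟨i, hxi, fun j hj => (hpre j hj).1.symm, hyi⟩

/-! ### The orbit partition -/

/-- The words of length `n` can be partitioned into `(q-2)^n` good singletons and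
`(q^n - (q-2)^n)/2` good pairs; consequently the swap channel admits a complete
feedback single-error-correcting code with `(q^n + (q-2)^n)/2` messages. -/
theorem swap_channel_partition_and_code (q n : ℕ) (hq : 2 < q) (hn : 1 ≤ n)
    (hcond : q ^ (n - 1) ≤ 2 * (q - 2) ^ (n - 1)) :
    (∃ singles pairs : Finset (Finset (Fin n → Fin q)),
      (∀ w : Fin n → Fin q, ∃! P, P ∈ singles ∪ pairs ∧ w ∈ P) ∧
      (∀ P ∈ singles, GoodSingle q n P) ∧
      (∀ P ∈ pairs, GoodPair q n P) ∧
      singles.card = (q - 2) ^ n ∧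
      pairs.card = (q ^ n - (q - 2) ^ n) / 2) ∧
    SwapFeedbackCode q n ((q ^ n + (q - 2) ^ n) / 2) := by
  classical
  obtain ⟨σ, hσσ, hσgood, hσ⟩ := exists_word_involution hq hcond
  have hne : ∀ w, (¬ ∀ i, 2 ≤ (w i : ℕ)) → σ w ≠ w := by
    intro w hw heq
    obtain ⟨i, hi⟩ := exists_isFirstSwap w hw
    have h1 := (hσ w i hi).2.1
    rw [heq] at h1
    omega
  let G : Finset (Fin n → Fin q) := Finset.univ.filter fun w => ∀ i, 2 ≤ (w i : ℕ)
  let S : Finset (Finset (Fin n → Fin q)) := G.image fun w => {w}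
  let Q : Finset (Finset (Fin n → Fin q)) := Gᶜ.image fun w => {w, σ w}
  have hmemG : ∀ w, w ∈ G ↔ ∀ i, 2 ≤ (w i : ℕ) := fun w => by simp [G]
  -- Every part is the orbit of each of its members.
  have horb : ∀ P ∈ S ∪ Q, ∀ w ∈ P, P = {w, σ w} := by
    intro P hP w hw
    rcases Finset.mem_union.1 hP with hP | hP
    · obtain ⟨v, hv, rfl⟩ := Finset.mem_image.1 hP
      obtain rfl := Finset.mem_singleton.1 hw
      rw [hσgood w ((hmemG w).1 hv), Finset.pair_eq_singleton]
    · obtain ⟨v, hv, rfl⟩ := Finset.mem_image.1 hP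
      rcases Finset.mem_insert.1 hw with rfl | hw
      · rfl
      · obtain rfl := Finset.mem_singleton.1 hw
        rw [hσσ, Finset.pair_comm]
  have hpart : ∀ w : Fin n → Fin q, ∃! P, P ∈ S ∪ Q ∧ w ∈ P := by
    intro w
    refine ⟨{w, σ w}, ⟨?_, by simp⟩, fun P hP => horb P hP.1 w hP.2⟩
    by_cases hw : w ∈ G
    · refine Finset.mem_union_left _ (Finset.mem_image.2 ⟨w, hw, ?_⟩)
      rw [hσgood w ((hmemG w).1 hw), Finset.pair_eq_singleton]
    · exact Finset.mem_union_right _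
        (Finset.mem_image.2 ⟨w, Finset.mem_compl.2 hw, rfl⟩)
  have hS : ∀ P ∈ S, GoodSingle q n P := by
    intro P hP
    obtain ⟨v, hv, rfl⟩ := Finset.mem_image.1 hP
    exact ⟨v, rfl, (hmemG v).1 hv⟩
  have hQ : ∀ P ∈ Q, GoodPair q n P := by
    intro P hP
    obtain ⟨v, hv, rfl⟩ := Finset.mem_image.1 hP
    obtain ⟨i, hi⟩ := exists_isFirstSwap v
      fun h => Finset.mem_compl.1 hv ((hmemG v).2 h)
    obtain ⟨hpre, hflip, htail⟩ := hσ v i hi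
    have hlt := hi.1
    rcases htail with ht | ht
    · exact ⟨v, σ v, rfl, i, fun j hj => ⟨(hpre j hj).symm, hi.2 j hj⟩, hlt, hflip, ht⟩
    · refine ⟨σ v, v, Finset.pair_comm _ _, i,
        fun j hj => ⟨hpre j hj, ?_⟩, by omega, by omega, ht⟩
      rw [hpre j hj]
      exact hi.2 j hj
  have hGcard : G.card = (q - 2) ^ n := by
    have h := card_good_words q (Fin n)
    rw [Fintype.card_subtype, Fintype.card_fin] at h
    exact h
  have hScard : S.card = (q - 2) ^ n := by
    rw [← hGcard]
    exact Finset.card_image_of_injective _ Finset.singleton_injective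
  have hQ2 : ∀ P ∈ Q, P.card = 2 := by
    intro P hP
    obtain ⟨v, hv, rfl⟩ := Finset.mem_image.1 hP
    exact Finset.card_pair
      (hne v fun h => Finset.mem_compl.1 hv ((hmemG v).2 h)).symm
  have hSQ : Disjoint S Q := by
    rw [Finset.disjoint_left]
    intro P hP hP'
    obtain ⟨v, hv, rfl⟩ := Finset.mem_image.1 hP
    have := hQ2 _ hP'
    simp at this
  have hdisj : ∀ P ∈ S ∪ Q, ∀ P' ∈ S ∪ Q, P ≠ P' → Disjoint P P' := by
    intro P hP P' hP' hPP
    rw [Finset.disjoint_left]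
    intro w hw hw'
    exact hPP ((hpart w).unique ⟨hP, hw⟩ ⟨hP', hw'⟩)
  -- Double counting: the parts of sizes one and two exhaust all `q ^ n` words.
  have htotal : S.card + Q.card * 2 = q ^ n := by
    have hU : (S ∪ Q).biUnion id = Finset.univ := by
      ext w
      obtain ⟨P, hP, -⟩ := hpart w
      simp only [Finset.mem_biUnion, Finset.mem_univ, iff_true]
      exact ⟨P, hP.1, hP.2⟩
    have h := Finset.card_biUnion (s := S ∪ Q) (t := id) hdisj
    have hS1 : ∀ P ∈ S, P.card = 1 := by
      intro P hP
      obtain ⟨v, -, rfl⟩ := Finset.mem_image.1 hP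
      simp
    simp only [id] at h
    rw [hU, Finset.sum_union hSQ, Finset.sum_congr rfl hQ2, Finset.sum_congr rfl hS1] at h
    simp at h
    omega
  have hQcard : Q.card = (q ^ n - (q - 2) ^ n) / 2 := by omega
  refine ⟨⟨S, Q, hpart, hS, hQ, hScard, hQcard⟩, ?_⟩
  have hM : (S ∪ Q).card = (q ^ n + (q - 2) ^ n) / 2 := by
    rw [Finset.card_union_of_disjoint hSQ]
    omega
  let e := (S ∪ Q).equivFinOfCardEq hM
  refine ⟨fun m => (e.symm m : Finset (Fin n → Fin q)), fun m => ?_, fun m m' hmm => ?_⟩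
  · rcases Finset.mem_union.1 (e.symm m).2 with h | h
    · exact (hS _ h).isSwapCloud
    · exact (hQ _ h).isSwapCloud
  · exact hdisj _ (e.symm m).2 _ (e.symm m').2
      fun h => hmm (e.symm.injective (Subtype.ext h))
end

section
/- Let q > 2 and n ≥ 1. Every family of pairwise disjoint clouds of length n for the channel whose only possible errors exchange the symbols 0 and 1 has size at most (q^n + (q−2)^n)/2; that is, every single-error-correcting code with complete feedback for this channel has at most (q^n + (q−2)^n)/2 messages. -/
/-- A cloud whose root has an entry in `{0, 1}` contains, besides the root, a word that differs
from the root at that entry. -/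
theorem IsSwapCloud.two_le_card {q n : ℕ} {x : Fin n → Fin q} {B : Finset (Fin n → Fin q)}
    (h : IsSwapCloud q n x B) {i : Fin n} (hi : (x i : ℕ) < 2) : 2 ≤ B.card := by
  obtain ⟨y, ⟨hyB, -, hyi⟩, -⟩ := h.2.1 i hi
  refine Finset.one_lt_card.2 ⟨x, h.1, y, hyB, ?_⟩
  rintro rfl
  omega

/-- There are `(q - 2) ^ n` words with no entry in `{0, 1}`. -/
theorem card_words_without_swap_symbols (q n : ℕ) :
    (Fintype.piFinset fun _ : Fin n =>
      Finset.univ.filter fun a : Fin q => 2 ≤ (a : ℕ)).card = (q - 2) ^ n := by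
  have h : (Finset.univ.filter fun a : Fin q => 2 ≤ (a : ℕ)).card = q - 2 := by
    rw [← Finset.card_map Fin.valEmbedding, ← Nat.card_Ico]
    congr 1
    ext k
    simp only [Finset.mem_map, Finset.mem_filter, Finset.mem_univ, true_and,
      Fin.valEmbedding_apply, Finset.mem_Ico]
    constructor
    · rintro ⟨a, ha, rfl⟩
      exact ⟨ha, a.2⟩
    · rintro ⟨h2, hk⟩
      exact ⟨⟨k, hk⟩, h2, rfl⟩
  simp [Fintype.card_piFinset, h]

/-- Upper bound on the size of a complete-feedback code for the swap channel. -/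
theorem swap_channel_upper_bound (q n M : ℕ) (hq : 2 < q) (hn : 1 ≤ n)
    (h : SwapFeedbackCode q n M) :
    M ≤ (q ^ n + (q - 2) ^ n) / 2 := by
  classical
  obtain ⟨B, hB, hdisj⟩ := h
  choose x hx using hB
  have hinj : Function.Injective x := by
    intro m m' hmm
    by_contra hne
    exact Finset.disjoint_left.1 (hdisj m m' hne) (hx m).1 (hmm ▸ (hx m').1)
  set S := Fintype.piFinset fun _ : Fin n =>
    Finset.univ.filter fun a : Fin q => 2 ≤ (a : ℕ) with hS
  have hsum : ∑ m, (B m).card ≤ q ^ n := by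
    rw [← Finset.card_biUnion fun m _ m' _ hne => hdisj m m' hne]
    exact (Finset.card_le_univ _).trans (by simp)
  have hroots : (Finset.univ.filter fun m => x m ∈ S).card ≤ (q - 2) ^ n := by
    rw [← card_words_without_swap_symbols q n]
    exact Finset.card_le_card_of_injOn x (fun m hm => (Finset.mem_filter.1 hm).2) hinj.injOn
  -- A cloud of cardinality one is compensated by its root, which lies in `S`.
  have hm : ∀ m, 2 ≤ (B m).card + if x m ∈ S then 1 else 0 := by
    intro m
    by_cases hmS : x m ∈ S
    · have := Finset.card_pos.2 ⟨x m, (hx m).1⟩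
      simp only [hmS, if_true]
      omega
    · have hex : ∃ i, (x m i : ℕ) < 2 := by
        simpa [hS, Fintype.mem_piFinset] using hmS
      obtain ⟨i, hi⟩ := hex
      exact ((hx m).two_le_card hi).trans (Nat.le_add_right _ _)
  have htot := Finset.sum_le_sum fun m (_ : m ∈ Finset.univ) => hm m
  rw [Finset.sum_add_distrib, ← Finset.card_filter] at htot
  simp only [Finset.sum_const, Finset.card_univ, Fintype.card_fin, smul_eq_mul] at htot
  omega
end
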